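/- arXiv:2504.03211 — 4 statements merged into one kernel-verified Lean document; each statement's English description precedes it below -/
import Mathlib

section
/- Fix the event-independent setting with t = 1 and ECE budget ε ≥ 0, and assume the indirect utility U : [0,1] → [0,∞) is upper semicontinuous. Then there exist thresholds 0 ≤ p_L ≤ p_H ≤ 1, a slope α ≥ 0, and a finitely supported (ε,ℓ_1)-calibrated predictor f* that is optimal (V(f*) ≥ V(f) for every finitely supported (ε,ℓ_1)-calibrated predictor f) such that: (1) Miscalibration structure: for every p ∈ supp(f*), if p ∈ [0,p_L] then p ≤ κ(p); if p ∈ [p_L,p_H] then p = κ(p); and if p ∈ [p_H,1] then p ≥ κ(p). (2) Payoff structure: the points (p, U(p)) for p ∈ supp(f*) lie on the graph of a convex function, i.e., for all p_1 < p_2 < p_3 in supp(f*) one has (p_3−p_1)·U(p_2) ≤ (p_3−p_2)·U(p_1) + (p_2−p_1)·U(p_3); moreover U(p') − U(p) = α·(p'−p) for all p, p' ∈ supp(f*) ∩ [p_H,1], and U(p') − U(p) = −α·(p'−p) for all p, p' ∈ supp(f*) ∩ [0,p_L]. -/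
open Finset

noncomputable section

namespace PersuasiveCalibration

/-- The environment of the persuasive calibration problem: `n` events with
probabilities `lam i > 0` summing to one and sorted expected outcomes `theta i ∈ [0,1]`. -/
structure Setup (n : ℕ) : Type where
  lam : Fin n → ℝ
  theta : Fin n → ℝ
  lam_pos : ∀ i, 0 < lam i
  lam_sum : ∑ i, lam i = 1
  theta_mono : Monotone theta
  theta_mem : ∀ i, theta i ∈ Set.Icc (0 : ℝ) 1

variable {n : ℕ}

/-- A finitely supported probability distribution on `[0,1]`. -/
def IsDist (μ : ℝ →₀ ℝ) : Prop :=
  (∀ p, 0 ≤ μ p) ∧ (∀ p ∈ μ.support, p ∈ Set.Icc (0 : ℝ) 1) ∧ (∑ p ∈ μ.support, μ p) = 1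

/-- A predictor assigns to each event a finitely supported probability distribution on `[0,1]`. -/
def IsPredictor (f : Fin n → ℝ →₀ ℝ) : Prop := ∀ i, IsDist (f i)

/-- The (unconditional) prediction space of a predictor. -/
def suppF (f : Fin n → ℝ →₀ ℝ) : Finset ℝ := Finset.univ.biUnion fun i => (f i).support

/-- The marginalized predictor `f(p) = ∑ i, λ i * f i p`. -/
def marginal (S : Setup n) (f : Fin n → ℝ →₀ ℝ) (p : ℝ) : ℝ := ∑ i, S.lam i * f i p

/-- The true expected outcome conditional on the prediction `p`. -/
def kappa (S : Setup n) (f : Fin n → ℝ →₀ ℝ) (p : ℝ) : ℝ :=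
  (∑ i, S.lam i * f i p * S.theta i) / marginal S f p

/-- The `ℓ_t`-norm expected calibration error of a predictor. -/
def ECE (S : Setup n) (t : ℝ) (f : Fin n → ℝ →₀ ℝ) : ℝ :=
  (∑ p ∈ suppF f, marginal S f p * |kappa S f p - p| ^ t) ^ (1 / t)

/-- The principal's expected payoff from predictor `f` with indirect utilities `U i`. -/
def payoff (S : Setup n) (U : Fin n → ℝ → ℝ) (f : Fin n → ℝ →₀ ℝ) : ℝ :=
  ∑ i, S.lam i * ∑ p ∈ (f i).support, f i p * U i p

/-- The principal's payoff in the event-independent setting. -/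
def payoffEI (S : Setup n) (U : ℝ → ℝ) (f : Fin n → ℝ →₀ ℝ) : ℝ :=
  payoff S (fun _ => U) f

/-- A predictor is perfectly calibrated if `κ(q) = q` on its support. -/
def PerfectlyCalibrated (S : Setup n) (g : Fin n → ℝ →₀ ℝ) : Prop :=
  ∀ q ∈ suppF g, kappa S g q = q

/-- An event-independent post-processing plan: a finitely supported probability
distribution on `[0,1] × [0,1]`; the first coordinate is `q`, the second is `p`. -/
def IsPlan (χ : ℝ × ℝ →₀ ℝ) : Prop :=
  (∀ x, 0 ≤ χ x) ∧ (∀ x ∈ χ.support, x.1 ∈ Set.Icc (0 : ℝ) 1 ∧ x.2 ∈ Set.Icc (0 : ℝ) 1) ∧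
    (∑ x ∈ χ.support, χ x) = 1

/-- The `ℓ_t` calibration cost `∑ χ(q,p) |q - p|^t` of a plan. -/
def planCost (t : ℝ) (χ : ℝ × ℝ →₀ ℝ) : ℝ := ∑ x ∈ χ.support, χ x * |x.1 - x.2| ^ t

/-- The `q`-marginal `∑_p χ(q, p)` of a plan. -/
def planMargQ (χ : ℝ × ℝ →₀ ℝ) (q : ℝ) : ℝ :=
  ∑ x ∈ χ.support.filter fun x => x.1 = q, χ x

/-- Feasibility of a post-processing plan for a perfectly calibrated predictor `g` and
an `ℓ_t` ECE budget `ε`. -/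
def FeasiblePlan (S : Setup n) (t ε : ℝ) (g : Fin n → ℝ →₀ ℝ) (χ : ℝ × ℝ →₀ ℝ) : Prop :=
  planCost t χ ≤ ε ^ t ∧ ∀ q, planMargQ χ q = marginal S g q

/-- The value `f_i(p) = ∑_q (g̃_i(q)/g(q)) χ(q,p)` of the predictor generated by `(g̃, χ)`. -/
def genVal (S : Setup n) (g : Fin n → ℝ →₀ ℝ) (χ : ℝ × ℝ →₀ ℝ) (i : Fin n) (p : ℝ) : ℝ :=
  ∑ q ∈ suppF g, g i q / marginal S g q * χ (q, p)

/-- A predictor generated by some perfectly calibrated predictor and some feasible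
event-independent post-processing plan. -/
def IsGenerated (S : Setup n) (t ε : ℝ) (f : Fin n → ℝ →₀ ℝ) : Prop :=
  ∃ (g : Fin n → ℝ →₀ ℝ) (χ : ℝ × ℝ →₀ ℝ),
    IsPredictor g ∧ PerfectlyCalibrated S g ∧ IsPlan χ ∧ FeasiblePlan S t ε g χ ∧
      ∀ i p, f i p = genVal S g χ i p

/-- The CDF of a finitely supported distribution. -/
def cdf (μ : ℝ →₀ ℝ) (x : ℝ) : ℝ := ∑ q ∈ μ.support.filter fun q => q ≤ x, μ q

/-- The CDF of the distribution placing mass `λ_i` at `θ_i`. -/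
def priorCdf (S : Setup n) (x : ℝ) : ℝ :=
  ∑ i ∈ Finset.univ.filter fun i => S.theta i ≤ x, S.lam i

/-- `μ` is a mean-preserving contraction of the distribution putting mass `λ_i` on `θ_i`. -/
def MPCprior (S : Setup n) (μ : ℝ →₀ ℝ) : Prop :=
  (∀ s ∈ Set.Icc (0 : ℝ) 1,
      (∫ x in (0 : ℝ)..s, cdf μ x) ≤ ∫ x in (0 : ℝ)..s, priorCdf S x) ∧
    (∫ x in (0 : ℝ)..(1 : ℝ), cdf μ x) = ∫ x in (0 : ℝ)..(1 : ℝ), priorCdf S x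

/-- The objective `∑ χ(q,p) U(p)` of the program LP-TwoStep. -/
def LPobj (U : ℝ → ℝ) (χ : ℝ × ℝ →₀ ℝ) : ℝ := ∑ x ∈ χ.support, χ x * U x.2

/-- Feasibility for the program LP-TwoStep. -/
def LPFeasible (S : Setup n) (ε t : ℝ) (χ : ℝ × ℝ →₀ ℝ) (g : ℝ →₀ ℝ) : Prop :=
  (∀ x, 0 ≤ χ x) ∧
  (∀ x ∈ χ.support, x.1 ∈ Set.Icc (0 : ℝ) 1 ∧ x.2 ∈ Set.Icc (0 : ℝ) 1) ∧
  planCost t χ ≤ ε ^ t ∧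
  (∀ q, planMargQ χ q = g q) ∧ IsDist g ∧ MPCprior S g

/-- The optimal value of LP-TwoStep. -/
def OPTLP (S : Setup n) (ε t : ℝ) (U : ℝ → ℝ) : ℝ :=
  sSup {v | ∃ (χ : ℝ × ℝ →₀ ℝ) (g : ℝ →₀ ℝ), LPFeasible S ε t χ g ∧ v = LPobj U χ}

/-- Symmetric linear-tailed convex function with linear tails `[0, xL]`, `[xH, 1]` and
tail slopes `s1`, `s2` of equal absolute value. -/
def SymLinTailedConvex (Γ : ℝ → ℝ) (xL xH s1 s2 : ℝ) : Prop :=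
  ConvexOn ℝ (Set.Icc (0 : ℝ) 1) Γ ∧ 0 ≤ xL ∧ xL ≤ xH ∧ xH ≤ 1 ∧ |s1| = |s2| ∧
    (∃ c1, ∀ x ∈ Set.Icc (0 : ℝ) xL, Γ x = c1 + s1 * x) ∧
    (∃ c2, ∀ x ∈ Set.Icc xH (1 : ℝ), Γ x = c2 + s2 * x)

/-- Tuples `(i, j, q, p)` indexing a bi-event post-processing plan. -/
abbrev BiTuple (n : ℕ) := Fin n × Fin n × ℝ × ℝ

/-- The contribution ratio `r_{i,j}(q)`. -/
def ratio (S : Setup n) (i j : Fin n) (q : ℝ) : ℝ :=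
  if S.theta i < S.theta j then (S.theta j - q) / (S.theta j - S.theta i) else 1

/-- The contribution of the tuple `x = (i', j', q, p)` to event `i`:
`r_{i,j'}(q)` if `i' = i`, and `1 - r_{i',i}(q)` if `j' = i ≠ i'`. -/
def contrib (S : Setup n) (x : BiTuple n) (i : Fin n) : ℝ :=
  (if x.1 = i then ratio S x.1 x.2.1 x.2.2.1 else 0) +
    (if x.2.1 = i ∧ x.1 ≠ i then 1 - ratio S x.1 x.2.1 x.2.2.1 else 0)

/-- A bi-event post-processing plan. -/
def IsBiPlan (S : Setup n) (χ : BiTuple n →₀ ℝ) : Prop :=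
  (∀ x, 0 ≤ χ x) ∧
    ∀ x ∈ χ.support, x.1 ≤ x.2.1 ∧ x.2.2.1 ∈ Set.Icc (0 : ℝ) 1 ∧
      x.2.2.2 ∈ Set.Icc (0 : ℝ) 1 ∧ S.theta x.1 ≤ x.2.2.1 ∧ x.2.2.1 ≤ S.theta x.2.1

/-- Feasibility of a bi-event post-processing plan for `ℓ_t` ECE budget `ε`. -/
def FeasibleBiPlan (S : Setup n) (t ε : ℝ) (χ : BiTuple n →₀ ℝ) : Prop :=
  IsBiPlan S χ ∧
    (∑ x ∈ χ.support, χ x * |x.2.2.1 - x.2.2.2| ^ t) ≤ ε ^ t ∧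
    ∀ i, (∑ x ∈ χ.support, χ x * contrib S x i) = S.lam i

/-- The value `f_i(p)` of the predictor generated by a bi-event post-processing plan. -/
def genValBi (S : Setup n) (χ : BiTuple n →₀ ℝ) (i : Fin n) (p : ℝ) : ℝ :=
  1 / S.lam i * ∑ x ∈ χ.support.filter fun x => x.2.2.2 = p, χ x * contrib S x i

/-- The objective of LP-TwoStep+: `∑ χ_{i,j}(q,p) U_{i,j}(q,p)`. -/
def biObj (S : Setup n) (U : Fin n → ℝ → ℝ) (χ : BiTuple n →₀ ℝ) : ℝ :=
  ∑ x ∈ χ.support, χ x * (ratio S x.1 x.2.1 x.2.2.1 * U x.1 x.2.2.2 +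
    (1 - ratio S x.1 x.2.1 x.2.2.1) * U x.2.1 x.2.2.2)

/-- The optimal value of LP-TwoStep+. -/
def OPTBi (S : Setup n) (U : Fin n → ℝ → ℝ) (t ε : ℝ) : ℝ :=
  sSup {v | ∃ χ : BiTuple n →₀ ℝ, FeasibleBiPlan S t ε χ ∧ v = biObj S U χ}

/-- `U` is piecewise constant with all its discontinuity points in `Z`. -/
def PiecewiseConstWrt (Z : Finset ℝ) (U : ℝ → ℝ) : Prop :=
  ∀ x ∈ Set.Icc (0 : ℝ) 1, ∀ y ∈ Set.Icc (0 : ℝ) 1,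
    (∀ z ∈ Z, z ∉ Set.uIcc x y) → U x = U y

/-- The bound `S = ⌈2 ln(1/δ) / ln(1+δ)⌉` of the second discretization layer. -/
def Sbound (δ : ℝ) : ℕ := ⌈2 * Real.log (1 / δ) / Real.log (1 + δ)⌉₊

/-- The instance-dependent two-layer discretized set `S_δ`. -/
def gridSet (S : Setup n) (Z : Finset ℝ) (ε t δ : ℝ) : Set ℝ :=
  ({x : ℝ | ∃ k : ℕ, x = (k : ℝ) * δ} ∪ {(1 : ℝ)} ∪ Set.range S.theta ∪ (↑Z : Set ℝ) ∪
      {x : ℝ | ∃ z ∈ (↑Z : Set ℝ) ∪ Set.range S.theta, ∃ s : ℕ, s ≤ Sbound δ ∧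
        (x = z + (ε ^ t * δ * (1 + δ) ^ s) ^ (1 / t) ∨
          x = z - (ε ^ t * δ * (1 + δ) ^ s) ^ (1 / t))}) ∩
    Set.Icc (0 : ℝ) 1

/-- Feasibility for the discretized program LP-DiscTwoStep+. -/
def DiscFeasibleBiPlan (S : Setup n) (Z : Finset ℝ) (t ε δ : ℝ) (χ : BiTuple n →₀ ℝ) : Prop :=
  FeasibleBiPlan S t ε χ ∧
    ∀ x ∈ χ.support, x.2.2.1 ∈ gridSet S Z ε t δ ∧ x.2.2.2 ∈ gridSet S Z ε t δ

/-- The optimal value of LP-DiscTwoStep+. -/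
def OPTBiDisc (S : Setup n) (U : Fin n → ℝ → ℝ) (Z : Finset ℝ) (t ε δ : ℝ) : ℝ :=
  sSup {v | ∃ χ : BiTuple n →₀ ℝ, DiscFeasibleBiPlan S Z t ε δ χ ∧ v = biObj S U χ}

/-- A Bayesian persuasion instance with signal-dependent bias: states `θ_i` with
prior `λ`, actions `A`, sender utility `u a i = u(a, θ_i) ≥ 0`, and receiver utility
determined by `v1 a = v(a,1)` and `v0 a = v(a,0)`. -/
structure PSetup (n : ℕ) (A : Type*) : Type _ where
  lam : Fin n → ℝ
  theta : Fin n → ℝ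
  u : A → Fin n → ℝ
  v1 : A → ℝ
  v0 : A → ℝ
  lam_pos : ∀ i, 0 < lam i
  lam_sum : ∑ i, lam i = 1
  theta_mem : ∀ i, theta i ∈ Set.Icc (0 : ℝ) 1
  u_nonneg : ∀ a i, 0 ≤ u a i

variable {A σT : Type*}

/-- The receiver's utility from action `a` at belief mean `x`. -/
def rcvU (P : PSetup n A) (a : A) (x : ℝ) : ℝ := x * P.v1 a + (1 - x) * P.v0 a

/-- The total probability `m(σ)` of a signal `σ`. -/
def mass [Fintype σT] (P : PSetup n A) (π : Fin n → σT → ℝ) (σ : σT) : ℝ :=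
  ∑ i, P.lam i * π i σ

/-- The biased posterior mean `p(σ)` of the receiver upon signal `σ`. -/
def belief [Fintype σT] (P : PSetup n A) (π : Fin n → σT → ℝ) (b : σT → ℝ) (σ : σT) : ℝ :=
  (b σ + ∑ i, P.lam i * π i σ * P.theta i) / mass P π σ

/-- Validity of a sender strategy `(π, b)`. -/
def ValidStrategy [Fintype σT] (P : PSetup n A) (π : Fin n → σT → ℝ) (b : σT → ℝ) : Prop :=
  (∀ i σ, 0 ≤ π i σ) ∧ (∀ i, ∑ σ, π i σ = 1) ∧
    ∀ σ, 0 < mass P π σ → belief P π b σ ∈ Set.Icc (0 : ℝ) 1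

/-- `astar` is a receiver best-response selection for the strategy `(π, b)`. -/
def BestResponse [Fintype σT] (P : PSetup n A) (π : Fin n → σT → ℝ) (b : σT → ℝ)
    (astar : σT → A) : Prop :=
  ∀ σ, 0 < mass P π σ → ∀ a, rcvU P a (belief P π b σ) ≤ rcvU P (astar σ) (belief P π b σ)

/-- The bounded-rationality constraint on the total bias. -/
def BRconstraint [Fintype σT] (P : PSetup n A) (t ε : ℝ) (π : Fin n → σT → ℝ)
    (b : σT → ℝ) : Prop :=
  (∑ σ, mass P π σ * |b σ / mass P π σ| ^ t) ^ (1 / t) ≤ ε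

/-- The sender's expected payoff from strategy `π` with receiver selection `astar`. -/
def senderPayoff [Fintype σT] (P : PSetup n A) (π : Fin n → σT → ℝ) (astar : σT → A) : ℝ :=
  ∑ i, P.lam i * ∑ σ, π i σ * P.u (astar σ) i

/-- Feasibility for the action-recommendation program P-ActRec. -/
def PActRecFeasible [Fintype A] (P : PSetup n A) (t ε : ℝ)
    (π : Fin n → A → ℝ) (b : A → ℝ) : Prop :=
  (∀ i a, 0 ≤ π i a) ∧ (∀ i, ∑ a, π i a = 1) ∧
  (∀ a, mass P π a = 0 → b a = 0) ∧
  (∑ a, mass P π a * |b a / mass P π a| ^ t) ≤ ε ^ t ∧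
  (∀ a, 0 ≤ b a + ∑ i, P.lam i * π i a * P.theta i) ∧
  (∀ a, b a + ∑ i, P.lam i * π i a * P.theta i ≤ mass P π a) ∧
  ∀ a a' : A,
    (b a + ∑ i, P.lam i * π i a * P.theta i) * P.v1 a' +
        (mass P π a - (b a + ∑ i, P.lam i * π i a * P.theta i)) * P.v0 a' ≤
      (b a + ∑ i, P.lam i * π i a * P.theta i) * P.v1 a +
        (mass P π a - (b a + ∑ i, P.lam i * π i a * P.theta i)) * P.v0 a

/-- The sender-side marginal probability of recommendation `a` (calibration model). -/
def pmass [Fintype A] (S : Setup n) (π : Fin n → A → ℝ) (a : A) : ℝ := ∑ i, S.lam i * π i a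

/-- The biased posterior mean associated with recommendation `a` (calibration model). -/
def pbelief [Fintype A] (S : Setup n) (π : Fin n → A → ℝ) (b : A → ℝ) (a : A) : ℝ :=
  (b a + ∑ i, S.lam i * π i a * S.theta i) / pmass S π a

/-- Signed calibration gap mass at `q`. -/
def gapC (S : Setup n) (f : Fin n → ℝ →₀ ℝ) (q : ℝ) : ℝ :=
  ∑ i, S.lam i * f i q * (S.theta i - q)

/-- The `ℓ_1` calibration cost. -/
def costC (S : Setup n) (f : Fin n → ℝ →₀ ℝ) : ℝ := ∑ q ∈ suppF f, |gapC S f q|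

lemma zero_of_notMem_suppF {f : Fin n → ℝ →₀ ℝ} {q : ℝ} (h : q ∉ suppF f) (i : Fin n) :
    f i q = 0 := by
  by_contra h1
  apply h
  simp only [suppF, Finset.mem_biUnion, Finset.mem_univ, true_and, Finsupp.mem_support_iff]
  exact ⟨i, h1⟩

lemma gapC_zero (S : Setup n) {f : Fin n → ℝ →₀ ℝ} {q : ℝ} (h : q ∉ suppF f) :
    gapC S f q = 0 := by
  simp [gapC, zero_of_notMem_suppF h]

lemma costC_eq (S : Setup n) {f : Fin n → ℝ →₀ ℝ} {T : Finset ℝ} (h : suppF f ⊆ T) :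
    costC S f = ∑ q ∈ T, |gapC S f q| := by
  apply Finset.sum_subset h
  intro q _ hq
  simp [gapC_zero S hq]

lemma costC_nonneg (S : Setup n) (f : Fin n → ℝ →₀ ℝ) : 0 ≤ costC S f :=
  Finset.sum_nonneg fun _ _ => abs_nonneg _

lemma marginal_pos (S : Setup n) {f : Fin n → ℝ →₀ ℝ} (hf : IsPredictor f) {q : ℝ}
    (h : q ∈ suppF f) : 0 < marginal S f q := by
  simp only [suppF, Finset.mem_biUnion, Finset.mem_univ, true_and, Finsupp.mem_support_iff] at h
  obtain ⟨i, hi⟩ := h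
  apply Finset.sum_pos' (fun j _ => mul_nonneg (S.lam_pos j).le ((hf j).1 q))
  exact ⟨i, Finset.mem_univ _, mul_pos (S.lam_pos i) (lt_of_le_of_ne ((hf i).1 q) (Ne.symm hi))⟩

lemma mem_Icc_of_supp {f : Fin n → ℝ →₀ ℝ} (hf : IsPredictor f) {q : ℝ}
    (h : q ∈ suppF f) : q ∈ Set.Icc (0 : ℝ) 1 := by
  simp only [suppF, Finset.mem_biUnion, Finset.mem_univ, true_and] at h
  obtain ⟨i, hi⟩ := h
  exact (hf i).2.1 q hi

lemma gapC_eq (S : Setup n) {f : Fin n → ℝ →₀ ℝ} (hf : IsPredictor f) {q : ℝ}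
    (h : q ∈ suppF f) : gapC S f q = marginal S f q * (kappa S f q - q) := by
  have hm := marginal_pos S hf h
  rw [mul_sub, kappa, mul_div_cancel₀ _ hm.ne', gapC, marginal, Finset.sum_mul,
    ← Finset.sum_sub_distrib]
  exact Finset.sum_congr rfl fun i _ => by ring

lemma ECE_eq (S : Setup n) {f : Fin n → ℝ →₀ ℝ} (hf : IsPredictor f) :
    ECE S 1 f = costC S f := by
  simp only [ECE, Real.rpow_one, div_one, costC]
  apply Finset.sum_congr rfl
  intro q hq
  rw [gapC_eq S hf hq, abs_mul, abs_of_pos (marginal_pos S hf hq)]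

lemma isDist_iff (μ : ℝ →₀ ℝ) : IsDist μ ↔ (∀ p, 0 ≤ μ p) ∧
    (∀ p ∉ Set.Icc (0 : ℝ) 1, μ p = 0) ∧
    Finsupp.linearCombination ℝ (fun _ : ℝ => (1 : ℝ)) μ = 1 := by
  unfold IsDist
  rw [Finsupp.linearCombination_apply, Finsupp.sum]
  simp only [smul_eq_mul, mul_one, Finsupp.mem_support_iff]
  have : (∀ p, μ p ≠ 0 → p ∈ Set.Icc (0 : ℝ) 1) ↔ (∀ p ∉ Set.Icc (0 : ℝ) 1, μ p = 0) :=
    forall_congr' fun p => ⟨fun h h1 => by_contra fun h2 => h1 (h h2),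
      fun h h1 => by_contra fun h2 => h1 (h h2)⟩
  rw [this]

lemma pay_eq (S : Setup n) (U : ℝ → ℝ) (f : Fin n → ℝ →₀ ℝ) :
    payoffEI S U f = ∑ i, S.lam i * Finsupp.linearCombination ℝ U (f i) := by
  simp [payoffEI, payoff, Finsupp.linearCombination_apply, Finsupp.sum]

lemma mix (S : Setup n) (U : ℝ → ℝ) {f g : Fin n → ℝ →₀ ℝ} (hf : IsPredictor f)
    (hg : IsPredictor g) {a b : ℝ} (ha : 0 ≤ a) (hb : 0 ≤ b) (hab : a + b = 1) :
    ∃ h : Fin n → ℝ →₀ ℝ, IsPredictor h ∧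
      payoffEI S U h = a * payoffEI S U f + b * payoffEI S U g ∧
      costC S h ≤ a * costC S f + b * costC S g := by
  refine ⟨fun i => a • f i + b • g i, ?_, ?_, ?_⟩
  · intro i
    have h1 := (isDist_iff _).1 (hf i)
    have h2 := (isDist_iff _).1 (hg i)
    refine (isDist_iff _).2 ⟨fun p => ?_, fun p hp => ?_, ?_⟩
    · simp only [Finsupp.add_apply, Finsupp.smul_apply, smul_eq_mul]
      have := h1.1 p
      have := h2.1 p
      positivity
    · simp [h1.2.1 p hp, h2.2.1 p hp]
    · rw [map_add, map_smul, map_smul, h1.2.2, h2.2.2]; simpa using hab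
  · simp only [pay_eq, map_add, map_smul, Finset.mul_sum, ← Finset.sum_add_distrib, smul_eq_mul]
    exact Finset.sum_congr rfl fun i _ => by ring
  · set h : Fin n → ℝ →₀ ℝ := fun i => a • f i + b • g i with hh
    have hsub : suppF h ⊆ suppF f ∪ suppF g := by
      intro q hq
      by_contra hc
      rw [Finset.mem_union, not_or] at hc
      simp only [suppF, Finset.mem_biUnion, Finset.mem_univ, true_and,
        Finsupp.mem_support_iff] at hq
      obtain ⟨i, hi⟩ := hq
      apply hi
      simp [hh, zero_of_notMem_suppF hc.1, zero_of_notMem_suppF hc.2]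
    rw [costC_eq S hsub, costC_eq S (f := f) Finset.subset_union_left,
      costC_eq S (f := g) Finset.subset_union_right, Finset.mul_sum, Finset.mul_sum,
      ← Finset.sum_add_distrib]
    apply Finset.sum_le_sum
    intro q _
    have : gapC S h q = a * gapC S f q + b * gapC S g q := by
      simp only [gapC, Finset.mul_sum, ← Finset.sum_add_distrib]
      exact Finset.sum_congr rfl fun i _ => by simp [hh]; ring
    rw [this]
    refine (abs_add_le _ _).trans ?_
    rw [abs_mul, abs_mul, abs_of_nonneg ha, abs_of_nonneg hb]

/-- Move a fraction `s` of the mass at `a` to `b`. -/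
def move (f : Fin n → ℝ →₀ ℝ) (a b s : ℝ) : Fin n → ℝ →₀ ℝ := fun i =>
  f i + (Finsupp.single b (s * f i a) - Finsupp.single a (s * f i a))

lemma move_b {f : Fin n → ℝ →₀ ℝ} {a b s : ℝ} (hab : a ≠ b) (i : Fin n) :
    move f a b s i b = f i b + s * f i a := by
  simp [move, hab]

lemma move_a {f : Fin n → ℝ →₀ ℝ} {a b s : ℝ} (hab : a ≠ b) (i : Fin n) :
    move f a b s i a = (1 - s) * f i a := by
  simp [move, hab.symm]; ring

lemma move_q {f : Fin n → ℝ →₀ ℝ} {a b s q : ℝ} (ha : q ≠ a) (hb : q ≠ b) (i : Fin n) :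
    move f a b s i q = f i q := by
  simp [move, ha.symm, hb.symm]

lemma move_pred {f : Fin n → ℝ →₀ ℝ} (hf : IsPredictor f) {a b s : ℝ} (hab : a ≠ b)
    (hb : b ∈ Set.Icc (0 : ℝ) 1) (hs : s ∈ Set.Icc (0 : ℝ) 1) :
    IsPredictor (move f a b s) := by
  intro i
  have h1 := (isDist_iff _).1 (hf i)
  refine (isDist_iff _).2 ⟨fun p => ?_, fun p hp => ?_, ?_⟩
  · have hp := h1.1 p
    have ha := h1.1 a
    by_cases hpb : p = b
    · subst hpb
      rw [move_b hab]
      exact add_nonneg hp (mul_nonneg hs.1 ha)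
    by_cases hpa : p = a
    · subst hpa
      rw [move_a hab]
      exact mul_nonneg (by linarith [hs.2]) ha
    rw [move_q hpa hpb]; exact hp
  · have hpb : p ≠ b := fun h => hp (h ▸ hb)
    by_cases hpa : p = a
    · subst hpa
      rw [move_a hab, h1.2.1 p hp, mul_zero]
    rw [move_q hpa hpb]; exact h1.2.1 p hp
  · rw [move, map_add, map_sub, Finsupp.linearCombination_single,
      Finsupp.linearCombination_single, h1.2.2]; ring

lemma move_pay (S : Setup n) (U : ℝ → ℝ) (f : Fin n → ℝ →₀ ℝ) (a b s : ℝ) :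
    payoffEI S U (move f a b s) =
      payoffEI S U f + s * marginal S f a * (U b - U a) := by
  simp only [pay_eq, move, map_add, map_sub, Finsupp.linearCombination_single, smul_eq_mul,
    marginal, Finset.mul_sum, Finset.sum_mul, ← Finset.sum_add_distrib]
  exact Finset.sum_congr rfl fun i _ => by ring

lemma move_marg (S : Setup n) {f : Fin n → ℝ →₀ ℝ} {a b s q : ℝ} (ha : q ≠ a) (hb : q ≠ b) :
    marginal S (move f a b s) q = marginal S f q := by
  simp [marginal, move_q ha hb]

lemma move_gap_q (S : Setup n) {f : Fin n → ℝ →₀ ℝ} {a b s q : ℝ} (ha : q ≠ a) (hb : q ≠ b) :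
    gapC S (move f a b s) q = gapC S f q := by
  simp [gapC, move_q ha hb]

lemma move_gap_a (S : Setup n) {f : Fin n → ℝ →₀ ℝ} {a b s : ℝ} (hab : a ≠ b) :
    gapC S (move f a b s) a = (1 - s) * gapC S f a := by
  simp only [gapC, move_a hab, Finset.mul_sum]
  exact Finset.sum_congr rfl fun i _ => by ring

lemma move_gap_b (S : Setup n) {f : Fin n → ℝ →₀ ℝ} {a b s : ℝ} (hab : a ≠ b) :
    gapC S (move f a b s) b =
      gapC S f b + s * (gapC S f a + marginal S f a * (a - b)) := by
  simp only [gapC, move_b hab, marginal, Finset.mul_sum, Finset.sum_mul,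
    ← Finset.sum_add_distrib]
  exact Finset.sum_congr rfl fun i _ => by ring

lemma move_cost (S : Setup n) (f : Fin n → ℝ →₀ ℝ) {a b s : ℝ} (hab : a ≠ b)
    (hs : s ∈ Set.Icc (0 : ℝ) 1) :
    costC S (move f a b s) = costC S f - s * |gapC S f a| - |gapC S f b| +
      |gapC S f b + s * (gapC S f a + marginal S f a * (a - b))| := by
  set T := insert a (insert b (suppF f ∪ suppF (move f a b s))) with hT
  have h1 : suppF f ⊆ T := by intro q hq; simp [hT, hq]
  have h2 : suppF (move f a b s) ⊆ T := by intro q hq; simp [hT, hq]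
  rw [costC_eq S h1, costC_eq S h2]
  have haT : a ∈ T := by simp [hT]
  have hbT : b ∈ T.erase a := by simp [hT, hab.symm]
  rw [← Finset.add_sum_erase T _ haT, ← Finset.add_sum_erase _ _ hbT,
    ← Finset.add_sum_erase T (fun q => |gapC S f q|) haT,
    ← Finset.add_sum_erase _ (fun q => |gapC S f q|) hbT]
  have h3 : ∑ x ∈ (T.erase a).erase b, |gapC S (move f a b s) x| =
      ∑ x ∈ (T.erase a).erase b, |gapC S f x| := by
    apply Finset.sum_congr rfl
    intro q hq
    rw [Finset.mem_erase, Finset.mem_erase] at hq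
    rw [move_gap_q S hq.2.1 hq.1]
  rw [h3, move_gap_a S hab, move_gap_b S hab, abs_mul, abs_of_nonneg (by linarith [hs.2])]
  ring

/-- Lexicographic optimality. -/
def LexOpt (S : Setup n) (U : ℝ → ℝ) (ε : ℝ) (f : Fin n → ℝ →₀ ℝ) : Prop :=
  IsPredictor f ∧ costC S f ≤ ε ∧ ∀ g, IsPredictor g → costC S g ≤ ε →
    payoffEI S U g ≤ payoffEI S U f ∧ (payoffEI S U f ≤ payoffEI S U g → costC S f ≤ costC S g)

lemma lex_convex (S : Setup n) (U : ℝ → ℝ) {ε : ℝ} {f : Fin n → ℝ →₀ ℝ} (h : LexOpt S U ε f)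
    {p₁ p₂ p₃ : ℝ} (h1 : p₁ ∈ suppF f) (h2 : p₂ ∈ suppF f) (h3 : p₃ ∈ suppF f)
    (h12 : p₁ < p₂) (h23 : p₂ < p₃) :
    (p₃ - p₁) * U p₂ ≤ (p₃ - p₂) * U p₁ + (p₂ - p₁) * U p₃ := by
  obtain ⟨hf, hc, hopt⟩ := h
  have m1 := marginal_pos S hf h1
  have m3 := marginal_pos S hf h3
  have i1 := mem_Icc_of_supp hf h1
  have i2 := mem_Icc_of_supp hf h2
  have i3 := mem_Icc_of_supp hf h3
  by_contra hlt
  push Not at hlt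
  set δ := min (marginal S f p₁) (marginal S f p₃) with hδ
  have hδ0 : 0 < δ := lt_min m1 m3
  set s := δ * (p₃ - p₂) / marginal S f p₁ with hs
  set t := δ * (p₂ - p₁) / marginal S f p₃ with ht
  have hsm : s * marginal S f p₁ = δ * (p₃ - p₂) := by rw [hs]; field_simp
  have htm : t * marginal S f p₃ = δ * (p₂ - p₁) := by rw [ht]; field_simp
  have hs01 : s ∈ Set.Icc (0:ℝ) 1 := by
    constructor
    · exact div_nonneg (mul_nonneg hδ0.le (by linarith)) m1.le
    · rw [hs, div_le_one m1]
      have : δ ≤ marginal S f p₁ := min_le_left _ _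
      nlinarith [i1.1, i3.2]
  have ht01 : t ∈ Set.Icc (0:ℝ) 1 := by
    constructor
    · exact div_nonneg (mul_nonneg hδ0.le (by linarith)) m3.le
    · rw [ht, div_le_one m3]
      have : δ ≤ marginal S f p₃ := min_le_right _ _
      nlinarith [i1.1, i3.2]
  have hg := move_pred hf h12.ne i2 hs01
  have hk := move_pred hg h23.ne' i2 ht01
  have e1 := move_cost S f h12.ne hs01
  have e2 := move_cost S (move f p₁ p₂ s) h23.ne' ht01
  have hm : marginal S (move f p₁ p₂ s) p₃ = marginal S f p₃ :=
    move_marg S (h12.trans h23).ne' h23.ne'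
  have hg3 : gapC S (move f p₁ p₂ s) p₃ = gapC S f p₃ :=
    move_gap_q S (h12.trans h23).ne' h23.ne'
  rw [hm, hg3, move_gap_b S h12.ne, e1] at e2
  have P := move_pay S U (move f p₁ p₂ s) p₃ p₂ t
  rw [move_pay S U f p₁ p₂ s, hm] at P
  have e3 : gapC S f p₂ + s * (gapC S f p₁ + marginal S f p₁ * (p₁ - p₂)) +
      t * (gapC S f p₃ + marginal S f p₃ * (p₃ - p₂)) =
      gapC S f p₂ + s * gapC S f p₁ + t * gapC S f p₃ := by
    linear_combination (p₁ - p₂) * hsm + (p₃ - p₂) * htm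
  rw [e3] at e2
  have e4 : |gapC S f p₂ + s * gapC S f p₁ + t * gapC S f p₃| ≤
      |gapC S f p₂| + s * |gapC S f p₁| + t * |gapC S f p₃| := by
    refine (abs_add_three _ _ _).trans ?_
    rw [abs_mul, abs_mul, abs_of_nonneg hs01.1, abs_of_nonneg ht01.1]
  have := (hopt _ hk (by linarith)).1
  rw [P, hsm, htm] at this
  nlinarith [mul_pos hδ0 (sub_pos.2 hlt)]

lemma lex_order (S : Setup n) (U : ℝ → ℝ) {ε : ℝ} {f : Fin n → ℝ →₀ ℝ} (h : LexOpt S U ε f)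
    {p q : ℝ} (h1 : p ∈ suppF f) (h2 : q ∈ suppF f)
    (hp : gapC S f p < 0) (hq : 0 < gapC S f q) : q < p := by
  by_contra hle
  push Not at hle
  have hpq : p < q := lt_of_le_of_ne hle (by rintro rfl; linarith)
  obtain ⟨hf, hc, hopt⟩ := h
  have m1 := marginal_pos S hf h1
  have m2 := marginal_pos S hf h2
  have i1 := mem_Icc_of_supp hf h1
  have i2 := mem_Icc_of_supp hf h2
  rcases le_total (U p) (U q) with hU | hU
  · set D := -gapC S f p + marginal S f p * (q - p) with hD
    have hD0 : 0 < D := by nlinarith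
    set s := min 1 (gapC S f q / D) with hs
    have hs0 : 0 < s := lt_min one_pos (div_pos hq hD0)
    have hs1 : s ≤ 1 := min_le_left _ _
    have hsD : s * D ≤ gapC S f q := by
      rw [← le_div_iff₀ hD0]; exact min_le_right _ _
    have e := move_cost S f hpq.ne ⟨hs0.le, hs1⟩
    have e1 : gapC S f q + s * (gapC S f p + marginal S f p * (p - q)) = gapC S f q - s * D := by
      rw [hD]; ring
    rw [e1, abs_of_neg hp, abs_of_pos hq, abs_of_nonneg (by linarith)] at e
    have e2 : costC S (move f p q s) < costC S f := by nlinarith [mul_pos hs0 hD0, mul_pos hs0 (neg_pos.2 hp)]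
    have := (hopt _ (move_pred hf hpq.ne i2 ⟨hs0.le, hs1⟩) (by linarith)).2
      (by rw [move_pay]; nlinarith [mul_nonneg (mul_pos hs0 m1).le (sub_nonneg.2 hU)])
    linarith
  · set D := gapC S f q + marginal S f q * (q - p) with hD
    have hD0 : 0 < D := by nlinarith
    set s := min 1 (-gapC S f p / D) with hs
    have hs0 : 0 < s := lt_min one_pos (div_pos (by linarith) hD0)
    have hs1 : s ≤ 1 := min_le_left _ _
    have hsD : s * D ≤ -gapC S f p := by
      rw [← le_div_iff₀ hD0]; exact min_le_right _ _
    have e := move_cost S f hpq.ne' ⟨hs0.le, hs1⟩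
    rw [← hD, abs_of_neg hp, abs_of_pos hq, abs_of_nonpos (by linarith)] at e
    have e2 : costC S (move f q p s) < costC S f := by nlinarith [mul_pos hs0 hD0, mul_pos hs0 hq]
    have := (hopt _ (move_pred hf hpq.ne' i1 ⟨hs0.le, hs1⟩) (by linarith)).2
      (by rw [move_pay]; nlinarith [mul_nonneg (mul_pos hs0 m2).le (sub_nonneg.2 hU)])
    linarith

/-- Lagrangian optimality. -/
def LagOpt (S : Setup n) (U : ℝ → ℝ) (α : ℝ) (f : Fin n → ℝ →₀ ℝ) : Prop :=
  ∀ g, IsPredictor g → payoffEI S U g - α * costC S g ≤ payoffEI S U f - α * costC S f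

lemma lag_high (S : Setup n) (U : ℝ → ℝ) {α : ℝ} {f : Fin n → ℝ →₀ ℝ} (hf : IsPredictor f)
    (h : LagOpt S U α f) {a b : ℝ} (h1 : a ∈ suppF f) (h2 : b ∈ suppF f) (hab : a ≠ b)
    (ha : gapC S f a ≤ 0) (hb : gapC S f b < 0 ∨ (gapC S f b ≤ 0 ∧ a < b)) :
    U b - U a ≤ α * (b - a) := by
  have m1 := marginal_pos S hf h1
  have i1 := mem_Icc_of_supp hf h1
  have i2 := mem_Icc_of_supp hf h2
  have hb0 : gapC S f b ≤ 0 := by rcases hb with hb | hb; exacts [hb.le, hb.1]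
  obtain ⟨s, hs0, hs1, hs⟩ : ∃ s : ℝ, 0 < s ∧ s ≤ 1 ∧
      gapC S f b + s * (marginal S f a * (a - b)) ≤ 0 := by
    rcases hb with hb | hb
    · refine ⟨min 1 (-gapC S f b / marginal S f a), lt_min one_pos (div_pos (by linarith) m1),
        min_le_left _ _, ?_⟩
      set s := min 1 (-gapC S f b / marginal S f a) with hs
      have hs0 : 0 < s := lt_min one_pos (div_pos (by linarith) m1)
      have hsD : s * marginal S f a ≤ -gapC S f b := by
        rw [← le_div_iff₀ m1]; exact min_le_right _ _
      nlinarith [mul_pos hs0 m1, i1.2, i2.1]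
    · exact ⟨1, one_pos, le_rfl, by nlinarith [hb.1, hb.2]⟩
  have e := move_cost S f hab ⟨hs0.le, hs1⟩
  rw [abs_of_nonpos ha, abs_of_nonpos hb0, abs_of_nonpos (by nlinarith)] at e
  have := h _ (move_pred hf hab i2 ⟨hs0.le, hs1⟩)
  rw [move_pay, e] at this
  have hpos := mul_pos hs0 m1
  have : (s * marginal S f a) * (U b - U a) ≤ (s * marginal S f a) * (α * (b - a)) := by
    linarith
  exact le_of_mul_le_mul_left this hpos

lemma lag_low (S : Setup n) (U : ℝ → ℝ) {α : ℝ} {f : Fin n → ℝ →₀ ℝ} (hf : IsPredictor f)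
    (h : LagOpt S U α f) {a b : ℝ} (h1 : a ∈ suppF f) (h2 : b ∈ suppF f) (hab : a ≠ b)
    (ha : 0 ≤ gapC S f a) (hb : 0 < gapC S f b ∨ (0 ≤ gapC S f b ∧ b < a)) :
    U b - U a ≤ -α * (b - a) := by
  have m1 := marginal_pos S hf h1
  have i1 := mem_Icc_of_supp hf h1
  have i2 := mem_Icc_of_supp hf h2
  have hb0 : 0 ≤ gapC S f b := by rcases hb with hb | hb; exacts [hb.le, hb.1]
  obtain ⟨s, hs0, hs1, hs⟩ : ∃ s : ℝ, 0 < s ∧ s ≤ 1 ∧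
      0 ≤ gapC S f b + s * (marginal S f a * (a - b)) := by
    rcases hb with hb | hb
    · refine ⟨min 1 (gapC S f b / marginal S f a), lt_min one_pos (div_pos (by linarith) m1),
        min_le_left _ _, ?_⟩
      set s := min 1 (gapC S f b / marginal S f a) with hs
      have hs0 : 0 < s := lt_min one_pos (div_pos (by linarith) m1)
      have hsD : s * marginal S f a ≤ gapC S f b := by
        rw [← le_div_iff₀ m1]; exact min_le_right _ _
      nlinarith [mul_pos hs0 m1, i1.1, i2.2]
    · exact ⟨1, one_pos, le_rfl, by nlinarith [hb.1, hb.2]⟩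
  have e := move_cost S f hab ⟨hs0.le, hs1⟩
  rw [abs_of_nonneg ha, abs_of_nonneg hb0, abs_of_nonneg (by nlinarith)] at e
  have := h _ (move_pred hf hab i2 ⟨hs0.le, hs1⟩)
  rw [move_pay, e] at this
  have hpos := mul_pos hs0 m1
  have : (s * marginal S f a) * (U b - U a) ≤ (s * marginal S f a) * (-α * (b - a)) := by
    linarith
  exact le_of_mul_le_mul_left this hpos

/-- The fully informative predictor. -/
def fullInfo (S : Setup n) : Fin n → ℝ →₀ ℝ := fun i => Finsupp.single (S.theta i) 1

lemma fullInfo_pred (S : Setup n) : IsPredictor (fullInfo S) := by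
  intro i
  refine (isDist_iff _).2 ⟨fun p => ?_, fun p hp => ?_, ?_⟩
  · simp only [fullInfo, Finsupp.single_apply]; split_ifs <;> norm_num
  · simp only [fullInfo, Finsupp.single_apply]
    rw [if_neg]; rintro rfl; exact hp (S.theta_mem i)
  · simp [fullInfo]

lemma fullInfo_cost (S : Setup n) : costC S (fullInfo S) = 0 := by
  apply Finset.sum_eq_zero
  intro q _
  rw [abs_eq_zero]
  apply Finset.sum_eq_zero
  intro i _
  simp only [fullInfo, Finsupp.single_apply]
  split_ifs with h
  · simp [h]
  · simp

lemma exists_alpha (S : Setup n) (U : ℝ → ℝ) {ε : ℝ} (hε : 0 < ε) {f : Fin n → ℝ →₀ ℝ}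
    (h : LexOpt S U ε f) : ∃ α, 0 ≤ α ∧ LagOpt S U α f := by
  obtain ⟨hf, hc, hopt⟩ := h
  set v := payoffEI S U f with hv
  set A : Set ℝ := {r | ∃ g, IsPredictor g ∧ costC S g < ε ∧
    r = (v - payoffEI S U g) / (ε - costC S g)} with hA
  have hA0 : ∀ r ∈ A, 0 ≤ r := by
    rintro r ⟨g, hg, hgc, rfl⟩
    exact div_nonneg (sub_nonneg.2 (hopt g hg hgc.le).1) (by linarith)
  have hAne : A.Nonempty :=
    ⟨_, fullInfo S, fullInfo_pred S, by rw [fullInfo_cost]; exact hε, rfl⟩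
  have hbdd : BddBelow A := ⟨0, hA0⟩
  have hα : 0 ≤ sInf A := le_csInf hAne hA0
  have key : ∀ g, IsPredictor g → payoffEI S U g ≤ v + sInf A * (costC S g - ε) := by
    intro g hg
    rcases lt_trichotomy (costC S g) ε with hlt | heq | hgt
    · have := csInf_le hbdd ⟨g, hg, hlt, rfl⟩
      rw [le_div_iff₀ (by linarith)] at this
      linarith
    · have := (hopt g hg heq.le).1
      rw [heq]; linarith
    · have : (payoffEI S U g - v) / (costC S g - ε) ≤ sInf A := by
        apply le_csInf hAne
        rintro r ⟨k, hk, hkc, rfl⟩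
        rw [div_le_div_iff₀ (by linarith) (by linarith)]
        set D := costC S g - costC S k with hD
        have hD0 : 0 < D := by linarith
        obtain ⟨m, hm, hmp, hmc⟩ := mix S U hg hk (a := (ε - costC S k) / D)
          (b := (costC S g - ε) / D) (div_nonneg (by linarith) hD0.le)
          (div_nonneg (by linarith) hD0.le) (by rw [← add_div, div_eq_one_iff_eq hD0.ne']; rw [hD]; ring)
        have hmε : costC S m ≤ ε := by
          refine hmc.trans (le_of_eq ?_)
          field_simp
          rw [hD]; ring
        have := (hopt m hm hmε).1
        rw [hmp] at this
        have h5 : (ε - costC S k) / D * payoffEI S U g + (costC S g - ε) / D * payoffEI S U k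
          = ((ε - costC S k) * payoffEI S U g + (costC S g - ε) * payoffEI S U k) / D := by ring
        rw [h5, div_le_iff₀ hD0, hD] at this
        linarith
      rw [div_le_iff₀ (by linarith)] at this
      linarith
  refine ⟨sInf A, hα, fun g hg => ?_⟩
  have h1 := key g hg
  have h2 := key f hf
  have h3 := mul_nonneg hα (sub_nonneg.2 hc)
  linarith

/-- Payoff in signal form. -/
def sPay {ι : Type} [Fintype ι] (S : Setup n) (U : ℝ → ℝ)
    (y : (ι → ℝ) × (ι → Fin n → ℝ)) : ℝ :=
  ∑ j, ∑ i, S.lam i * (y.2 j i * U (y.1 j))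

/-- Cost in signal form. -/
def sCost {ι : Type} [Fintype ι] (S : Setup n) (y : (ι → ℝ) × (ι → Fin n → ℝ)) : ℝ :=
  ∑ j, |∑ i, S.lam i * y.2 j i * (S.theta i - y.1 j)|

/-- Signal structures. -/
def sSet (n : ℕ) (ι : Type) [Fintype ι] : Set ((ι → ℝ) × (ι → Fin n → ℝ)) :=
  {y | (∀ j, y.1 j ∈ Set.Icc (0 : ℝ) 1) ∧ (∀ j i, y.2 j i ∈ Set.Icc (0 : ℝ) 1) ∧
    ∀ i, ∑ j, y.2 j i = 1}

lemma sSet_compact (n : ℕ) (ι : Type) [Fintype ι] : IsCompact (sSet n ι) := by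
  have h1 : IsCompact ((Set.univ.pi fun _ : ι => Set.Icc (0 : ℝ) 1) ×ˢ
      (Set.univ.pi fun _ : ι => Set.univ.pi fun _ : Fin n => Set.Icc (0 : ℝ) 1)) :=
    (isCompact_univ_pi fun _ => isCompact_Icc).prod
      (isCompact_univ_pi fun _ => isCompact_univ_pi fun _ => isCompact_Icc)
  have h2 : IsClosed {y : (ι → ℝ) × (ι → Fin n → ℝ) | ∀ i, ∑ j, y.2 j i = 1} := by
    simp only [Set.ofPred_forall]
    exact isClosed_iInter fun i => isClosed_eq (by fun_prop) continuous_const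
  convert h1.inter_right h2 using 1
  ext y
  simp only [sSet, Set.mem_ofPred_eq, Set.mem_inter_iff, Set.mem_prod, Set.mem_univ_pi]
  tauto

lemma sCost_cont {ι : Type} [Fintype ι] (S : Setup n) :
    Continuous (sCost (ι := ι) S) := by
  unfold sCost
  fun_prop

lemma usc_mul {X : Type*} [TopologicalSpace X] {s : Set X} {y p : X → ℝ} {U : ℝ → ℝ}
    (hU0 : ∀ p ∈ Set.Icc (0 : ℝ) 1, 0 ≤ U p)
    (hU : UpperSemicontinuousOn U (Set.Icc (0 : ℝ) 1)) (hy : Continuous y) (hp : Continuous p)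
    (hy0 : ∀ x ∈ s, 0 ≤ y x) (hps : ∀ x ∈ s, p x ∈ Set.Icc (0 : ℝ) 1) :
    UpperSemicontinuousOn (fun x => y x * U (p x)) s := by
  intro x hx r hr
  have h0 := hU0 _ (hps x hx)
  obtain ⟨u, hu, hur⟩ : ∃ u, U (p x) < u ∧ y x * u < r := by
    have hc : Filter.Tendsto (fun u => y x * u) (nhdsWithin (U (p x)) (Set.Ioi (U (p x))))
        (nhds (y x * U (p x))) :=
      (by fun_prop : Continuous fun u => y x * u).continuousAt.tendsto.mono_left
        nhdsWithin_le_nhds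
    obtain ⟨u, h1, h2⟩ := ((hc.eventually (gt_mem_nhds hr)).and self_mem_nhdsWithin).exists
    exact ⟨u, h2, h1⟩
  have e1 : ∀ᶠ z in nhdsWithin x s, U (p z) < u := by
    have ht : Filter.Tendsto p (nhdsWithin x s) (nhdsWithin (p x) (Set.Icc 0 1)) :=
      tendsto_nhdsWithin_of_tendsto_nhds_of_eventually_within _
        (hp.continuousAt.tendsto.mono_left nhdsWithin_le_nhds)
        (by filter_upwards [self_mem_nhdsWithin] with z hz using hps z hz)
    exact ht.eventually (hU (p x) (hps x hx) u hu)
  have e2 : ∀ᶠ z in nhdsWithin x s, y z * u < r :=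
    ((hy.mul continuous_const).continuousAt.tendsto.mono_left
      nhdsWithin_le_nhds).eventually (gt_mem_nhds hur)
  filter_upwards [e1, e2, self_mem_nhdsWithin] with z h1 h2 hz
  exact lt_of_le_of_lt (mul_le_mul_of_nonneg_left h1.le (hy0 z hz)) h2

lemma sPay_usc {ι : Type} [Fintype ι] (S : Setup n) {U : ℝ → ℝ}
    (hU0 : ∀ p ∈ Set.Icc (0 : ℝ) 1, 0 ≤ U p)
    (hU : UpperSemicontinuousOn U (Set.Icc (0 : ℝ) 1)) :
    UpperSemicontinuousOn (sPay (ι := ι) S U) (sSet n ι) := by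
  unfold sPay
  apply upperSemicontinuousOn_sum
  intro j _
  apply upperSemicontinuousOn_sum
  intro i _
  have := usc_mul (s := sSet n ι) (y := fun y => S.lam i * y.2 j i) (p := fun y => y.1 j) hU0 hU
    (by fun_prop) (by fun_prop) (fun x hx => mul_nonneg (S.lam_pos i).le (hx.2.1 j i).1)
    (fun x hx => hx.1 j)
  simpa only [mul_assoc] using this

lemma of_signal {ι : Type} [Fintype ι] (S : Setup n) (U : ℝ → ℝ)
    {y : (ι → ℝ) × (ι → Fin n → ℝ)} (hy : y ∈ sSet n ι) :
    ∃ f : Fin n → ℝ →₀ ℝ, IsPredictor f ∧ payoffEI S U f = sPay S U y ∧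
      costC S f ≤ sCost S y := by
  classical
  set f : Fin n → ℝ →₀ ℝ := fun i => ∑ j, Finsupp.single (y.1 j) (y.2 j i) with hf
  have hfa : ∀ i q, f i q = ∑ j, if y.1 j = q then y.2 j i else 0 := by
    intro i q
    simp only [hf, Finsupp.finsetSum_apply, Finsupp.single_apply]
  refine ⟨f, ?_, ?_, ?_⟩
  · intro i
    refine (isDist_iff _).2 ⟨fun p => ?_, fun p hp => ?_, ?_⟩
    · rw [hfa]
      apply Finset.sum_nonneg
      intro j _
      split_ifs
      · exact (hy.2.1 j i).1
      · exact le_rfl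
    · rw [hfa]
      apply Finset.sum_eq_zero
      intro j _
      rw [if_neg]
      rintro rfl
      exact hp (hy.1 j)
    · rw [hf]
      simp only [map_sum, Finsupp.linearCombination_single, smul_eq_mul, mul_one]
      exact hy.2.2 i
  · rw [pay_eq, hf]
    simp only [map_sum, Finsupp.linearCombination_single, smul_eq_mul, Finset.mul_sum, sPay]
    exact Finset.sum_comm
  · have hsub : suppF f ⊆ Finset.univ.image y.1 := by
      intro q hq
      by_contra hc
      simp only [suppF, Finset.mem_biUnion, Finset.mem_univ, true_and,
        Finsupp.mem_support_iff] at hq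
      obtain ⟨i, hi⟩ := hq
      apply hi
      rw [hfa]
      apply Finset.sum_eq_zero
      intro j _
      rw [if_neg]
      rintro rfl
      exact hc (Finset.mem_image_of_mem _ (Finset.mem_univ _))
    rw [costC_eq S hsub]
    have hg : ∀ q, gapC S f q =
        ∑ j with y.1 j = q, ∑ i, S.lam i * y.2 j i * (S.theta i - y.1 j) := by
      intro q
      rw [Finset.sum_comm]
      simp only [gapC, hfa]
      apply Finset.sum_congr rfl
      intro i _
      rw [Finset.mul_sum, Finset.sum_mul, Finset.sum_filter]
      apply Finset.sum_congr rfl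
      intro j _
      split_ifs with h
      · rw [h]
      · simp
    calc ∑ q ∈ Finset.univ.image y.1, |gapC S f q|
        ≤ ∑ q ∈ Finset.univ.image y.1, ∑ j with y.1 j = q,
          |∑ i, S.lam i * y.2 j i * (S.theta i - y.1 j)| := by
          apply Finset.sum_le_sum
          intro q _
          rw [hg]
          exact Finset.abs_sum_le_sum_abs _ _
      _ = sCost S y := by
          rw [Finset.sum_fiberwise_of_maps_to
            (fun j _ => Finset.mem_image_of_mem _ (Finset.mem_univ j))]
          rfl

lemma to_signal (S : Setup n) (U : ℝ → ℝ) {f : Fin n → ℝ →₀ ℝ} (hf : IsPredictor f) :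
    ∃ y ∈ sSet n (Fin (n + 3)), sPay S U y = payoffEI S U f ∧ sCost S y = costC S f := by
  classical
  have hn : 0 < n := by
    rcases Nat.eq_zero_or_pos n with rfl | h
    · have := S.lam_sum; simp at this
    · exact h
  have hsum : ∀ i, ∑ p ∈ suppF f, f i p = 1 := by
    intro i
    rw [← (hf i).2.2]
    symm
    apply Finset.sum_subset
    · intro q hq; simp only [suppF, Finset.mem_biUnion, Finset.mem_univ, true_and]; exact ⟨i, hq⟩
    · intro q _ hq; simpa using hq
  have hpay : payoffEI S U f = ∑ p ∈ suppF f, ∑ i, S.lam i * (f i p * U p) := by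
    rw [Finset.sum_comm, payoffEI, payoff]
    apply Finset.sum_congr rfl
    intro i _
    rw [← Finset.mul_sum]
    congr 1
    apply Finset.sum_subset
    · intro q hq; simp only [suppF, Finset.mem_biUnion, Finset.mem_univ, true_and]; exact ⟨i, hq⟩
    · intro q _ hq
      rw [Finsupp.notMem_support_iff] at hq
      simp [hq]
  have hne : (suppF f).Nonempty := by
    by_contra h
    rw [Finset.not_nonempty_iff_eq_empty] at h
    have := hsum ⟨0, hn⟩
    rw [h] at this
    simp at this
  set c : ℝ := ((suppF f).card : ℝ) with hc
  have hc0 : 0 < c := by rw [hc]; exact_mod_cast hne.card_pos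
  set v : ℝ → (Fin n → ℝ) × ℝ × ℝ := fun p =>
    (fun i => f i p, ∑ i, S.lam i * (f i p * U p), |gapC S f p|) with hv
  have hmem : ∑ p ∈ suppF f, c⁻¹ • v p ∈ convexHull ℝ (v '' (suppF f : Set ℝ)) := by
    apply (convex_convexHull ℝ _).sum_mem
    · intro p _; positivity
    · rw [Finset.sum_const, nsmul_eq_mul, ← hc]; field_simp
    · intro p hp; exact subset_convexHull ℝ _ ⟨p, hp, rfl⟩
  obtain ⟨ι, _, z, w, hz, haff, hw, hw1, hx⟩ := eq_pos_convex_span_of_mem_convexHull hmem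
  have hcard : Fintype.card ι ≤ Fintype.card (Fin (n + 3)) := by
    have h1 := haff.card_le_finrank_succ
    have h2 := Submodule.finrank_le (vectorSpan ℝ (Set.range z))
    have h3 : Module.finrank ℝ ((Fin n → ℝ) × ℝ × ℝ) = n + 2 := by simp
    rw [Fintype.card_fin]
    omega
  obtain ⟨e⟩ := Function.Embedding.nonempty_of_card_le hcard
  have hr : ∀ j, ∃ p ∈ suppF f, v p = z j := by
    intro j
    obtain ⟨p, hp, hpz⟩ := hz ⟨j, rfl⟩
    exact ⟨p, hp, hpz⟩
  choose r hr1 hr2 using hr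
  have hx' : ∑ j, (c * w j) • v (r j) = ∑ p ∈ suppF f, v p := by
    simp only [hr2, mul_smul, ← Finset.smul_sum, hx]
    rw [smul_smul, mul_inv_cancel₀ hc0.ne', one_smul]
  have k1 : ∀ i, ∑ j, (c * w j) * f i (r j) = 1 := by
    intro i
    have := congrFun (congrArg Prod.fst hx') i
    simp only [Prod.fst_sum, Finset.sum_apply, Prod.smul_fst, Pi.smul_apply, smul_eq_mul, hv,
      hsum] at this
    exact this
  have k2 : ∑ j, (c * w j) * ∑ i, S.lam i * (f i (r j) * U (r j)) = payoffEI S U f := by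
    have := congrArg (fun t => t.2.1) hx'
    simp only [Prod.fst_sum, Prod.snd_sum, Prod.smul_fst, Prod.smul_snd, smul_eq_mul, hv,
      ← hpay] at this
    exact this
  have k3 : ∑ j, (c * w j) * |gapC S f (r j)| = costC S f := by
    have := congrArg (fun t => t.2.2) hx'
    simp only [Prod.snd_sum, Prod.smul_snd, smul_eq_mul, hv] at this
    exact this
  set P : Fin (n + 3) → ℝ := Function.extend e r (fun _ => 0) with hP
  set X : Fin (n + 3) → Fin n → ℝ :=
    Function.extend e (fun j i => (c * w j) * f i (r j)) (fun _ _ => 0) with hX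
  have Pe : ∀ j, P (e j) = r j := fun j => e.injective.extend_apply _ _ _
  have Xe : ∀ j, X (e j) = fun i => (c * w j) * f i (r j) :=
    fun j => e.injective.extend_apply _ _ _
  have Pn : ∀ k, k ∉ Set.range e → P k = 0 := fun k hk =>
    Function.extend_apply' _ _ _ hk
  have Xn : ∀ k, k ∉ Set.range e → X k = fun _ => 0 := fun k hk =>
    Function.extend_apply' _ _ _ hk
  have X0 : ∀ k i, 0 ≤ X k i := by
    intro k i
    by_cases hk : k ∈ Set.range e
    · obtain ⟨j, rfl⟩ := hk
      rw [Xe]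
      exact mul_nonneg (mul_pos hc0 (hw j)).le ((hf i).1 _)
    · rw [Xn k hk]
  have Xs : ∀ i, ∑ k, X k i = 1 := by
    intro i
    rw [← k1 i]
    symm
    apply Fintype.sum_of_injective e e.injective
    · intro k hk; rw [Xn k hk]
    · intro j; rw [Xe]
  refine ⟨(P, X), ⟨?_, ?_, Xs⟩, ?_, ?_⟩
  · intro k
    by_cases hk : k ∈ Set.range e
    · obtain ⟨j, rfl⟩ := hk
      simp only [Pe]
      exact mem_Icc_of_supp hf (hr1 j)
    · simp [Pn k hk]
  · intro k i
    refine ⟨X0 k i, ?_⟩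
    rw [← Xs i]
    exact Finset.single_le_sum (f := fun k => X k i) (fun k _ => X0 k i) (Finset.mem_univ k)
  · rw [← k2, sPay]
    symm
    apply Fintype.sum_of_injective e e.injective
    · intro k hk; simp [Xn k hk]
    · intro j
      simp only [Xe, Pe, Finset.mul_sum]
      exact Finset.sum_congr rfl fun i _ => by ring
  · rw [← k3, sCost]
    symm
    apply Fintype.sum_of_injective e e.injective
    · intro k hk; simp [Xn k hk]
    · intro j
      simp only [Xe, Pe]
      rw [← abs_of_pos (mul_pos hc0 (hw j)), ← abs_mul, abs_of_pos (mul_pos hc0 (hw j)), gapC,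
        Finset.mul_sum]
      congr 1
      exact Finset.sum_congr rfl fun i _ => by ring

lemma exists_lexOpt (S : Setup n) {ε : ℝ} (hε : 0 ≤ ε) {U : ℝ → ℝ}
    (hU0 : ∀ p ∈ Set.Icc (0 : ℝ) 1, 0 ≤ U p)
    (hU : UpperSemicontinuousOn U (Set.Icc (0 : ℝ) 1)) : ∃ f, LexOpt S U ε f := by
  set K := sSet n (Fin (n + 3)) ∩ {y | sCost S y ≤ ε} with hK
  have hKc : IsCompact K :=
    (sSet_compact _ _).inter_right (isClosed_le (sCost_cont S) continuous_const)
  have hKu : UpperSemicontinuousOn (sPay S U) K := (sPay_usc S hU0 hU).mono Set.inter_subset_left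
  obtain ⟨y0, hy0, _, hy0c⟩ := to_signal S U (fullInfo_pred S)
  have hKne : K.Nonempty := ⟨y0, hy0, by simpa [hy0c, fullInfo_cost] using hε⟩
  obtain ⟨y1, hy1, hmax⟩ := hKu.exists_isMaxOn hKne hKc
  obtain ⟨V, hV, hVe⟩ := upperSemicontinuousOn_iff_preimage_Ici.1 hKu (sPay S U y1)
  have hc2 : IsCompact (K ∩ sPay S U ⁻¹' Set.Ici (sPay S U y1)) := by
    rw [hVe]; exact hKc.inter_right hV
  obtain ⟨y, hy, hmin⟩ := hc2.exists_isMinOn ⟨y1, hy1, le_refl (sPay S U y1)⟩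
    (sCost_cont S).continuousOn
  obtain ⟨f, hf, hfp, hfc⟩ := of_signal S U hy.1.1
  have hyy : sPay S U y1 ≤ sPay S U y := hy.2
  have hyc : sCost S y ≤ ε := hy.1.2
  refine ⟨f, hf, hfc.trans hyc, fun g hg hgc => ?_⟩
  obtain ⟨x, hx, hxp, hxc⟩ := to_signal S U hg
  have hxK : x ∈ K := ⟨hx, by rw [Set.mem_ofPred_eq, hxc]; exact hgc⟩
  have h1 : sPay S U x ≤ sPay S U y1 := hmax hxK
  refine ⟨by rw [hfp, ← hxp]; exact h1.trans hyy, fun hle => ?_⟩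
  have h2 : sCost S y ≤ sCost S x := hmin ⟨hxK, by
    rw [Set.mem_preimage, Set.mem_Ici, hxp]; rw [hfp] at hle; exact hyy.trans hle⟩
  rw [← hxc]
  exact hfc.trans h2

lemma below_gap (F : Finset ℝ) {h : ℝ} (hh : 0 < h) :
    ∃ M, 0 ≤ M ∧ M < h ∧ ∀ p ∈ F, p < h → p ≤ M := by
  have hne : (insert (0 : ℝ) (F.filter (· < h))).Nonempty := ⟨0, by simp⟩
  refine ⟨(insert (0 : ℝ) (F.filter (· < h))).max' hne, Finset.le_max' _ _ (by simp), ?_, ?_⟩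
  · rw [Finset.max'_lt_iff]
    intro y hy
    simp only [Finset.mem_insert, Finset.mem_filter] at hy
    rcases hy with rfl | hy
    exacts [hh, hy.2]
  · intro p hp hph
    exact Finset.le_max' _ _ (by simp [hp, hph])

lemma above_gap (F : Finset ℝ) {l : ℝ} (hl : l < 1) :
    ∃ M, M ≤ 1 ∧ l < M ∧ ∀ p ∈ F, l < p → M ≤ p := by
  have hne : (insert (1 : ℝ) (F.filter (l < ·))).Nonempty := ⟨1, by simp⟩
  refine ⟨(insert (1 : ℝ) (F.filter (l < ·))).min' hne, Finset.min'_le _ _ (by simp), ?_, ?_⟩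
  · rw [Finset.lt_min'_iff]
    intro y hy
    simp only [Finset.mem_insert, Finset.mem_filter] at hy
    rcases hy with rfl | hy
    exacts [hl, hy.2]
  · intro p hp hph
    exact Finset.min'_le _ _ (by simp [hp, hph])

lemma gap_zero_nonneg (S : Setup n) {f : Fin n → ℝ →₀ ℝ} (hf : IsPredictor f) :
    0 ≤ gapC S f 0 :=
  Finset.sum_nonneg fun i _ => mul_nonneg (mul_nonneg (S.lam_pos i).le ((hf i).1 0))
    (by linarith [(S.theta_mem i).1])

lemma gap_one_nonpos (S : Setup n) {f : Fin n → ℝ →₀ ℝ} (hf : IsPredictor f) :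
    gapC S f 1 ≤ 0 :=
  Finset.sum_nonpos fun i _ => mul_nonpos_of_nonneg_of_nonpos
    (mul_nonneg (S.lam_pos i).le ((hf i).1 1)) (by linarith [(S.theta_mem i).2])

lemma high_data (S : Setup n) (U : ℝ → ℝ) {ε α : ℝ} {f : Fin n → ℝ →₀ ℝ} (h : LexOpt S U ε f)
    (hα : LagOpt S U α f ∨ ∀ p ∈ suppF f, gapC S f p = 0) :
    ∃ M h : ℝ, 0 ≤ M ∧ M ≤ h ∧ h ≤ 1 ∧ (h = 1 ∨ (h ∈ suppF f ∧ gapC S f h < 0)) ∧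
      (∀ p ∈ suppF f, 0 < gapC S f p → p ≤ M) ∧
      (∀ p ∈ suppF f, p ≤ (M + h) / 2 → 0 ≤ gapC S f p) ∧
      (∀ p ∈ suppF f, (M + h) / 2 ≤ p → gapC S f p ≤ 0 ∧ U p - U h = α * (p - h)) := by
  have hf := h.1
  by_cases hN : ((suppF f).filter fun p => gapC S f p < 0).Nonempty
  · obtain ⟨b, hb, hbmin⟩ := Finset.exists_min_image _ id hN
    simp only [Finset.mem_filter, id] at hb hbmin
    have hL : LagOpt S U α f := by
      rcases hα with hα | hα
      · exact hα
      · have := hα b hb.1; linarith [hb.2]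
    have ib := mem_Icc_of_supp hf hb.1
    have hb0 : 0 < b := by
      refine lt_of_le_of_ne ib.1 ?_
      rintro rfl
      linarith [gap_zero_nonneg S hf, hb.2]
    obtain ⟨M, hM0, hMb, hM⟩ := below_gap (suppF f) hb0
    refine ⟨M, b, hM0, hMb.le, ib.2, Or.inr hb, ?_, ?_, ?_⟩
    · intro p hp hgp
      exact hM p hp (lex_order S U h hb.1 hp hb.2 hgp)
    · intro p hp hpM
      by_contra hneg
      have := hbmin p ⟨hp, not_le.1 hneg⟩
      linarith
    · intro p hp hpM
      have hbp : b ≤ p := by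
        by_contra hlt
        have := hM p hp (not_le.1 hlt)
        linarith
      have hgp : gapC S f p ≤ 0 := by
        by_contra hgt
        have := lex_order S U h hb.1 hp hb.2 (not_le.1 hgt)
        linarith
      refine ⟨hgp, ?_⟩
      rcases hbp.eq_or_lt with rfl | hlt
      · ring
      have h1 := lag_high S U hf hL hb.1 hp hlt.ne hb.2.le (Or.inr ⟨hgp, hlt⟩)
      have h2 := lag_high S U hf hL hp hb.1 hlt.ne' hgp (Or.inl hb.2)
      linarith
  · have hge : ∀ p ∈ suppF f, 0 ≤ gapC S f p := by
      intro p hp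
      by_contra hc
      exact hN ⟨p, Finset.mem_filter.2 ⟨hp, not_le.1 hc⟩⟩
    refine ⟨1, 1, zero_le_one, le_rfl, le_rfl, Or.inl rfl, ?_, fun p hp _ => hge p hp, ?_⟩
    · intro p hp _
      exact (mem_Icc_of_supp hf hp).2
    · intro p hp h1
      have : p = 1 := le_antisymm (mem_Icc_of_supp hf hp).2 (by linarith)
      subst this
      exact ⟨gap_one_nonpos S hf, by ring⟩

lemma low_data (S : Setup n) (U : ℝ → ℝ) {ε α : ℝ} {f : Fin n → ℝ →₀ ℝ} (h : LexOpt S U ε f)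
    (hα : LagOpt S U α f ∨ ∀ p ∈ suppF f, gapC S f p = 0) :
    ∃ l m : ℝ, 0 ≤ l ∧ l ≤ m ∧ m ≤ 1 ∧ (l = 0 ∨ (l ∈ suppF f ∧ 0 < gapC S f l)) ∧
      (∀ p ∈ suppF f, gapC S f p < 0 → m ≤ p) ∧
      (∀ p ∈ suppF f, (l + m) / 2 ≤ p → gapC S f p ≤ 0) ∧
      (∀ p ∈ suppF f, p ≤ (l + m) / 2 → 0 ≤ gapC S f p ∧ U p - U l = -α * (p - l)) := by
  have hf := h.1
  by_cases hN : ((suppF f).filter fun p => 0 < gapC S f p).Nonempty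
  · obtain ⟨b, hb, hbmax⟩ := Finset.exists_max_image _ id hN
    simp only [Finset.mem_filter, id] at hb hbmax
    have hL : LagOpt S U α f := by
      rcases hα with hα | hα
      · exact hα
      · have := hα b hb.1; linarith [hb.2]
    have ib := mem_Icc_of_supp hf hb.1
    have hb1 : b < 1 := by
      refine lt_of_le_of_ne ib.2 ?_
      rintro rfl
      linarith [gap_one_nonpos S hf, hb.2]
    obtain ⟨M, hM1, hMb, hM⟩ := above_gap (suppF f) hb1
    refine ⟨b, M, ib.1, hMb.le, hM1, Or.inr hb, ?_, ?_, ?_⟩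
    · intro p hp hgp
      exact hM p hp (lex_order S U h hp hb.1 hgp hb.2)
    · intro p hp hpM
      by_contra hneg
      have := hbmax p ⟨hp, not_le.1 hneg⟩
      linarith
    · intro p hp hpM
      have hbp : p ≤ b := by
        by_contra hlt
        have := hM p hp (not_le.1 hlt)
        linarith
      have hgp : 0 ≤ gapC S f p := by
        by_contra hgt
        have := lex_order S U h hp hb.1 (not_le.1 hgt) hb.2
        linarith
      refine ⟨hgp, ?_⟩
      rcases hbp.eq_or_lt with rfl | hlt
      · ring
      have h1 := lag_low S U hf hL hb.1 hp hlt.ne' hb.2.le (Or.inr ⟨hgp, hlt⟩)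
      have h2 := lag_low S U hf hL hp hb.1 hlt.ne hgp (Or.inl hb.2)
      linarith
  · have hge : ∀ p ∈ suppF f, gapC S f p ≤ 0 := by
      intro p hp
      by_contra hc
      exact hN ⟨p, Finset.mem_filter.2 ⟨hp, not_le.1 hc⟩⟩
    refine ⟨0, 0, le_rfl, le_rfl, zero_le_one, Or.inl rfl, ?_, fun p hp _ => hge p hp, ?_⟩
    · intro p hp _
      exact (mem_Icc_of_supp hf hp).1
    · intro p hp h1
      have : p = 0 := le_antisymm (by linarith) (mem_Icc_of_supp hf hp).1
      subst this
      exact ⟨gap_zero_nonneg S hf, by ring⟩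

/-- Structure of the optimal `(ε, ℓ_1)`-calibrated predictor in the
event-independent setting: there are thresholds `p_L ≤ p_H`, a slope `α ≥ 0`, and an
optimal predictor that is under-confident on `[0, p_L]`, perfectly calibrated on
`[p_L, p_H]`, over-confident on `[p_H, 1]`, whose support points lie on a convex
function, collinear with slope `α` on `[p_H, 1]` and slope `-α` on `[0, p_L]`. -/
theorem statement5 {n : ℕ} (S : Setup n) (ε : ℝ) (hε : 0 ≤ ε)
    (U : ℝ → ℝ) (hU0 : ∀ p ∈ Set.Icc (0 : ℝ) 1, 0 ≤ U p)
    (hUsc : UpperSemicontinuousOn U (Set.Icc (0 : ℝ) 1)) :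
    ∃ (pL pH α : ℝ) (fstar : Fin n → ℝ →₀ ℝ),
      0 ≤ pL ∧ pL ≤ pH ∧ pH ≤ 1 ∧ 0 ≤ α ∧
      IsPredictor fstar ∧ ECE S 1 fstar ≤ ε ∧
      (∀ f : Fin n → ℝ →₀ ℝ, IsPredictor f → ECE S 1 f ≤ ε →
        payoffEI S U f ≤ payoffEI S U fstar) ∧
      (∀ p ∈ suppF fstar, p ≤ pL → p ≤ kappa S fstar p) ∧
      (∀ p ∈ suppF fstar, pL ≤ p → p ≤ pH → p = kappa S fstar p) ∧
      (∀ p ∈ suppF fstar, pH ≤ p → kappa S fstar p ≤ p) ∧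
      (∀ p₁ ∈ suppF fstar, ∀ p₂ ∈ suppF fstar, ∀ p₃ ∈ suppF fstar,
        p₁ < p₂ → p₂ < p₃ →
          (p₃ - p₁) * U p₂ ≤ (p₃ - p₂) * U p₁ + (p₂ - p₁) * U p₃) ∧
      (∀ p ∈ suppF fstar, ∀ p' ∈ suppF fstar, pH ≤ p → pH ≤ p' →
        U p' - U p = α * (p' - p)) ∧
      (∀ p ∈ suppF fstar, ∀ p' ∈ suppF fstar, p ≤ pL → p' ≤ pL →
        U p' - U p = -α * (p' - p)) := by
  obtain ⟨f, hlex⟩ := exists_lexOpt S hε hU0 hUsc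
  have hf := hlex.1
  obtain ⟨α, hα0, hα⟩ : ∃ α, 0 ≤ α ∧ (LagOpt S U α f ∨ ∀ p ∈ suppF f, gapC S f p = 0) := by
    rcases hε.eq_or_lt with h0 | hpos
    · refine ⟨0, le_rfl, Or.inr fun p hp => ?_⟩
      have h1 : costC S f = 0 := le_antisymm (h0 ▸ hlex.2.1) (costC_nonneg S f)
      have h2 := (Finset.sum_eq_zero_iff_of_nonneg fun _ _ => abs_nonneg _).1 h1 p hp
      exact abs_eq_zero.1 h2
    · obtain ⟨α, h1, h2⟩ := exists_alpha S U hpos hlex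
      exact ⟨α, h1, Or.inl h2⟩
  obtain ⟨M, h, hM0, hMh, hh1, hh, hA, hB, hC⟩ := high_data S U hlex hα
  obtain ⟨l, m, hl0, hlm, hm1, hl, hD, hE, hF⟩ := low_data S U hlex hα
  have hlM : l ≤ M := by
    rcases hl with rfl | hl
    exacts [hM0, hA l hl.1 hl.2]
  have hmh : m ≤ h := by
    rcases hh with rfl | hh
    exacts [hm1, hD h hh.1 hh.2]
  have k1 : ∀ p ∈ suppF f, 0 ≤ gapC S f p → p ≤ kappa S f p := by
    intro p hp hg
    rw [gapC_eq S hf hp] at hg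
    linarith [nonneg_of_mul_nonneg_right hg (marginal_pos S hf hp)]
  have k2 : ∀ p ∈ suppF f, gapC S f p ≤ 0 → kappa S f p ≤ p := by
    intro p hp hg
    rw [gapC_eq S hf hp] at hg
    by_contra hc
    have := mul_pos (marginal_pos S hf hp) (sub_pos.2 (not_le.1 hc))
    linarith
  refine ⟨(l + m) / 2, (M + h) / 2, α, f, by linarith, by linarith, by linarith, hα0, hf,
    by rw [ECE_eq S hf]; exact hlex.2.1, ?_, ?_, ?_, ?_, ?_, ?_, ?_⟩
  · intro g hg hgc
    rw [ECE_eq S hg] at hgc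
    exact (hlex.2.2 g hg hgc).1
  · intro p hp h1
    exact k1 p hp (hF p hp h1).1
  · intro p hp h1 h2
    exact le_antisymm (k1 p hp (hB p hp h2)) (k2 p hp (hE p hp h1))
  · intro p hp h1
    exact k2 p hp (hC p hp h1).1
  · intro p₁ h1 p₂ h2 p₃ h3 h12 h23
    exact lex_convex S U hlex h1 h2 h3 h12 h23
  · intro p hp p' hp' h1 h2
    have e1 := (hC p hp h1).2
    have e2 := (hC p' hp' h2).2
    linarith
  · intro p hp p' hp' h1 h2
    have e1 := (hF p hp h1).2
    have e2 := (hF p' hp' h2).2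
    linarith

end PersuasiveCalibration
end
end

section
/- Fix the event-independent setting with t = 1 and ECE budget ε ≥ 0, and assume U : [0,1] → [0,∞) is upper semicontinuous. Then there exist thresholds 0 ≤ p_L ≤ p_H ≤ 1 and an optimal finitely supported (ε,ℓ_1)-calibrated predictor f* satisfying the miscalibration structure (p ≤ κ(p) for p ∈ supp(f*) ∩ [0,p_L], p = κ(p) for p ∈ supp(f*) ∩ [p_L,p_H], p ≥ κ(p) for p ∈ supp(f*) ∩ [p_H,1]) such that: (i) |supp(f*)| ≤ n + 2; (ii) |supp(f*_i)| ≤ 4 for every event i; and (iii) for every q ∈ [0,1], the set κ^{-1}(q) = {p ∈ supp(f*) : κ(p) = q} has at most 2 elements, and if it has exactly 2 elements then at least one of them lies in [0,p_L] ∪ [p_H,1]. -/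
open Finset

noncomputable section

namespace PersuasiveCalibration

variable {n : ℕ}

variable {A σT : Type*}

/-- Existence part: elementary objects. -/
def cm {N : ℕ} (x : Fin n → Fin N → ℝ) (k : Fin N) : ℝ := ∑ i, x i k

def cd {N : ℕ} (S : Setup n) (p : Fin N → ℝ) (x : Fin n → Fin N → ℝ) (k : Fin N) : ℝ :=
  ∑ i, x i k * (S.theta i - p k)

def cst {N : ℕ} (S : Setup n) (p : Fin N → ℝ) (x : Fin n → Fin N → ℝ) : ℝ := ∑ k, |cd S p x k|

def pay {N : ℕ} (U : ℝ → ℝ) (p : Fin N → ℝ) (x : Fin n → Fin N → ℝ) : ℝ :=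
  ∑ k, cm x k * U (p k)

def phi {N : ℕ} (x : Fin n → Fin N → ℝ) : ℝ := ∑ k, (cm x k) ^ 2

def sup {N : ℕ} (x : Fin n → Fin N → ℝ) : Finset (Fin n × Fin N) :=
  Finset.univ.filter fun a => x a.1 a.2 ≠ 0

structure Feas {N : ℕ} (S : Setup n) (ε : ℝ) (p : Fin N → ℝ) (x : Fin n → Fin N → ℝ) : Prop where
  hp : ∀ k, p k ∈ Set.Icc (0 : ℝ) 1
  hx : ∀ i k, 0 ≤ x i k
  row : ∀ i, ∑ k, x i k = S.lam i
  cost : cst S p x ≤ ε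

structure Opt {N : ℕ} (S : Setup n) (ε : ℝ) (U : ℝ → ℝ) (p : Fin N → ℝ)
    (x : Fin n → Fin N → ℝ) : Prop where
  feas : Feas S ε p x
  h1 : ∀ p' x', Feas S ε (N := N) p' x' → pay U p' x' ≤ pay U p x
  h2 : ∀ p' x', Feas S ε (N := N) p' x' → pay U p x ≤ pay U p' x' → cst S p x ≤ cst S p' x'
  h3 : ∀ p' x', Feas S ε (N := N) p' x' → pay U p x ≤ pay U p' x' → cst S p' x' ≤ cst S p x →
    phi x' ≤ phi x
  h4 : ∀ p' x', Feas S ε (N := N) p' x' → pay U p x ≤ pay U p' x' → cst S p' x' ≤ cst S p x →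
    phi x ≤ phi x' → (sup x').card ≤ (sup x).card

theorem lam_le_one (S : Setup n) (i : Fin n) : S.lam i ≤ 1 := by
  rw [← S.lam_sum]
  exact Finset.single_le_sum (fun j _ => (S.lam_pos j).le) (Finset.mem_univ i)

theorem feas_compact {N : ℕ} (S : Setup n) (ε : ℝ) :
    IsCompact {z : (Fin N → ℝ) × (Fin n → Fin N → ℝ) | Feas S ε z.1 z.2} := by
  have hK : IsCompact (Set.Icc (0 : (Fin N → ℝ) × (Fin n → Fin N → ℝ))
      ((fun _ => 1), (fun _ _ => 1))) := isCompact_Icc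
  refine hK.of_isClosed_subset ?_ ?_
  · have : {z : (Fin N → ℝ) × (Fin n → Fin N → ℝ) | Feas S ε z.1 z.2} =
        (⋂ k, {z | 0 ≤ z.1 k}) ∩ (⋂ k, {z | z.1 k ≤ 1}) ∩ (⋂ i, ⋂ k, {z | 0 ≤ z.2 i k}) ∩
        (⋂ i, {z | ∑ k, z.2 i k = S.lam i}) ∩ {z | cst S z.1 z.2 ≤ ε} := by
      ext z
      simp only [Set.mem_ofPred_eq, Set.mem_inter_iff, Set.mem_iInter]
      constructor
      · rintro ⟨a, b, c, d⟩
        exact ⟨⟨⟨⟨fun k => (a k).1, fun k => (a k).2⟩, b⟩, c⟩, d⟩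
      · rintro ⟨⟨⟨⟨a, a'⟩, b⟩, c⟩, d⟩
        exact ⟨fun k => ⟨a k, a' k⟩, b, c, d⟩
    rw [this]
    unfold cst cd
    refine ((((isClosed_iInter fun k => ?_).inter (isClosed_iInter fun k => ?_)).inter
      (isClosed_iInter fun i => isClosed_iInter fun k => ?_)).inter
      (isClosed_iInter fun i => ?_)).inter ?_
    · exact isClosed_le (by fun_prop) (by fun_prop)
    · exact isClosed_le (by fun_prop) (by fun_prop)
    · exact isClosed_le (by fun_prop) (by fun_prop)
    · exact isClosed_eq (by fun_prop) (by fun_prop)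
    · exact isClosed_le (by fun_prop) (by fun_prop)
  · rintro ⟨p, x⟩ ⟨a, b, c, d⟩
    refine ⟨⟨fun k => (a k).1, fun i k => b i k⟩, ⟨fun k => (a k).2, fun i k => ?_⟩⟩
    refine le_trans ?_ (lam_le_one S i)
    rw [← c i]
    exact Finset.single_le_sum (f := fun k => x i k) (fun j _ => b i j) (Finset.mem_univ k)

theorem usc_sum {α ι : Type*} [TopologicalSpace α] (T : Finset ι) (s : Set α) (f : ι → α → ℝ)
    (h : ∀ k ∈ T, UpperSemicontinuousOn (f k) s) :
    UpperSemicontinuousOn (fun z => ∑ k ∈ T, f k z) s := by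
  classical
  induction T using Finset.induction_on with
  | empty => simpa using upperSemicontinuousOn_const
  | insert a T ha ih =>
    simp only [Finset.sum_insert ha]
    exact (h a (by simp)).add (ih fun k hk => h k (by simp [hk]))

theorem pay_usc {N : ℕ} (S : Setup n) (ε : ℝ) (U : ℝ → ℝ)
    (hU0 : ∀ p ∈ Set.Icc (0 : ℝ) 1, 0 ≤ U p)
    (hUsc : UpperSemicontinuousOn U (Set.Icc (0 : ℝ) 1)) :
    UpperSemicontinuousOn (fun z : (Fin N → ℝ) × (Fin n → Fin N → ℝ) => pay U z.1 z.2)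
      {z | Feas S ε z.1 z.2} := by
  unfold pay
  refine usc_sum _ _ _ fun k _ => ?_
  intro z hz c hc
  simp only at hc
  have hm : Continuous fun z : (Fin N → ℝ) × (Fin n → Fin N → ℝ) => cm z.2 k := by
    unfold cm; fun_prop
  obtain ⟨u, hu1, hu2⟩ : ∃ u, U (z.1 k) < u ∧ cm z.2 k * u < c := by
    have h : ∀ᶠ u in nhdsWithin (U (z.1 k)) (Set.Ioi (U (z.1 k))), cm z.2 k * u < c := by
      apply Filter.Eventually.filter_mono nhdsWithin_le_nhds
      have : Continuous fun u => cm z.2 k * u := by fun_prop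
      exact this.continuousAt.eventually_lt_const hc
    obtain ⟨u, hu⟩ := (h.and self_mem_nhdsWithin).exists
    exact ⟨u, hu.2, hu.1⟩
  have e1 : ∀ᶠ z' in nhdsWithin z {z | Feas S ε z.1 z.2}, cm z'.2 k * u < c := by
    apply Filter.Eventually.filter_mono nhdsWithin_le_nhds
    exact (hm.mul continuous_const).continuousAt.eventually_lt_const hu2
  have e2 : ∀ᶠ z' in nhdsWithin z {z : (Fin N → ℝ) × (Fin n → Fin N → ℝ) | Feas S ε z.1 z.2},
      U (z'.1 k) < u := by
    have ht : Filter.Tendsto (fun z' : (Fin N → ℝ) × (Fin n → Fin N → ℝ) => z'.1 k)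
        (nhdsWithin z {z | Feas S ε z.1 z.2}) (nhdsWithin (z.1 k) (Set.Icc 0 1)) := by
      refine tendsto_nhdsWithin_of_tendsto_nhds_of_eventually_within _ ?_ ?_
      · exact ((by fun_prop : Continuous fun z' : (Fin N → ℝ) × (Fin n → Fin N → ℝ) =>
          z'.1 k).tendsto z).mono_left nhdsWithin_le_nhds
      · filter_upwards [self_mem_nhdsWithin] with z' hz'
        exact hz'.hp k
    exact ht.eventually (hUsc _ (hz.hp k) _ hu1)
  filter_upwards [e1, e2, self_mem_nhdsWithin] with z' h1 h2 h3
  have : 0 ≤ cm z'.2 k := Finset.sum_nonneg fun i _ => h3.hx i k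
  exact lt_of_le_of_lt (mul_le_mul_of_nonneg_left h2.le this) h1

theorem exists_opt {N : ℕ} (hN : 0 < N) (S : Setup n) (ε : ℝ) (hε : 0 ≤ ε) (U : ℝ → ℝ)
    (hU0 : ∀ p ∈ Set.Icc (0 : ℝ) 1, 0 ≤ U p)
    (hUsc : UpperSemicontinuousOn U (Set.Icc (0 : ℝ) 1)) :
    ∃ (p : Fin N → ℝ) (x : Fin n → Fin N → ℝ), Opt S ε U p x := by
  have hK := feas_compact (N := N) S ε
  have husc := pay_usc (N := N) S ε U hU0 hUsc
  set K := {z : (Fin N → ℝ) × (Fin n → Fin N → ℝ) | Feas S ε z.1 z.2} with hKdef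
  have hne : K.Nonempty := by
    refine ⟨((fun _ => ∑ i, S.lam i * S.theta i),
      (fun i k => if k = ⟨0, hN⟩ then S.lam i else 0)), ?_, ?_, ?_, ?_⟩
    · intro k
      refine ⟨?_, ?_⟩
      · show 0 ≤ ∑ i, S.lam i * S.theta i
        exact Finset.sum_nonneg fun i _ => mul_nonneg (S.lam_pos i).le (S.theta_mem i).1
      show ∑ i, S.lam i * S.theta i ≤ 1
      rw [← S.lam_sum]
      exact Finset.sum_le_sum fun i _ =>
        mul_le_of_le_one_right (S.lam_pos i).le (S.theta_mem i).2
    · intro i k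
      dsimp only
      split_ifs
      exacts [(S.lam_pos i).le, le_rfl]
    · intro i
      simp
    · have : ∀ k : Fin N, cd S (fun _ => ∑ i, S.lam i * S.theta i)
          (fun i k => if k = ⟨0, hN⟩ then S.lam i else 0) k = 0 := by
        intro k
        unfold cd
        by_cases hk : k = ⟨0, hN⟩
        · simp only [hk, if_true, mul_sub, Finset.sum_sub_distrib, ← Finset.sum_mul, S.lam_sum]
          ring
        · simp [hk]
      simp only [cst, this]
      simpa using hε
  obtain ⟨z1, hz1, hm1⟩ := UpperSemicontinuousOn.exists_isMaxOn hne hK husc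
  have hK1 := husc.isCompact_inter_preimage_Ici hK (pay U z1.1 z1.2)
  have ccst : Continuous fun z : (Fin N → ℝ) × (Fin n → Fin N → ℝ) => cst S z.1 z.2 := by
    unfold cst cd; fun_prop
  have cphi : Continuous fun z : (Fin N → ℝ) × (Fin n → Fin N → ℝ) => phi z.2 := by
    unfold phi cm; fun_prop
  obtain ⟨z2, hz2, hm2⟩ := hK1.exists_isMinOn ⟨z1, hz1, le_refl (pay U z1.1 z1.2)⟩ ccst.continuousOn
  have hK2 := hK1.inter_right (isClosed_le ccst (continuous_const (y := cst S z2.1 z2.2)))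
  obtain ⟨z3, hz3, hm3⟩ := hK2.exists_isMaxOn ⟨z2, hz2, le_refl (cst S z2.1 z2.2)⟩ cphi.continuousOn
  let Q : ℕ → Prop := fun c => ∃ z : (Fin N → ℝ) × (Fin n → Fin N → ℝ),
    (z ∈ K ∧ pay U z1.1 z1.2 ≤ pay U z.1 z.2) ∧ cst S z.1 z.2 ≤ cst S z2.1 z2.2 ∧
      phi z3.2 ≤ phi z.2 ∧ (sup z.2).card = c
  have hQb : ∀ c, Q c → c ≤ n * N := by
    rintro c ⟨z, _, _, _, rfl⟩
    refine (Finset.card_le_univ _).trans ?_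
    simp
  classical
  have hQ : Q (Nat.findGreatest Q (n * N)) := by
    have h0 : Q (sup z3.2).card := ⟨z3, hz3.1, hz3.2, le_rfl, rfl⟩
    exact Nat.findGreatest_spec (hQb _ h0) h0
  obtain ⟨z, ⟨hzK, hza⟩, hzb, hzc, hzd⟩ := hQ
  refine ⟨z.1, z.2, hzK, ?_, ?_, ?_, ?_⟩
  · intro p' x' h
    exact (hm1 (a := (p', x')) h).trans hza
  · intro p' x' h h'
    exact hzb.trans (hm2 (a := (p', x')) ⟨h, hza.trans h'⟩)
  · intro p' x' h h' h''
    exact (hm3 (a := (p', x')) ⟨⟨h, hza.trans h'⟩, h''.trans hzb⟩).trans hzc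
  · intro p' x' h h' h'' h'''
    rw [hzd]
    have : Q (sup x').card := ⟨(p', x'), ⟨h, hza.trans h'⟩, h''.trans hzb, hzc.trans h''', rfl⟩
    exact Nat.le_findGreatest (hQb _ this) this

theorem cm_lin {N : ℕ} (x y : Fin n → Fin N → ℝ) (t : ℝ) (k : Fin N) :
    cm (fun i k => x i k + t * y i k) k = cm x k + t * cm y k := by
  simp only [cm, Finset.sum_add_distrib, Finset.mul_sum]

theorem cd_lin {N : ℕ} (S : Setup n) (p : Fin N → ℝ) (x y : Fin n → Fin N → ℝ) (t : ℝ)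
    (k : Fin N) :
    cd S p (fun i k => x i k + t * y i k) k = cd S p x k + t * cd S p y k := by
  simp only [cd, Finset.mul_sum, ← Finset.sum_add_distrib]
  exact Finset.sum_congr rfl fun i _ => by ring

theorem pay_lin {N : ℕ} (U : ℝ → ℝ) (p : Fin N → ℝ) (x y : Fin n → Fin N → ℝ) (t : ℝ) :
    pay U p (fun i k => x i k + t * y i k) = pay U p x + t * pay U p y := by
  simp only [pay, Finset.mul_sum, ← Finset.sum_add_distrib, cm_lin]
  exact Finset.sum_congr rfl fun i _ => by ring

theorem row_lin {N : ℕ} (S : Setup n) (x y : Fin n → Fin N → ℝ) (t : ℝ)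
    (hx : ∀ i, ∑ k, x i k = S.lam i) (hy : ∀ i, ∑ k, y i k = 0) (i : Fin n) :
    ∑ k, (x i k + t * y i k) = S.lam i := by
  rw [Finset.sum_add_distrib, ← Finset.mul_sum, hx, hy]; ring

theorem ev_one (a b : ℝ) (ha : 0 < a) : ∀ᶠ t in nhds (0 : ℝ), 0 < a + t * b := by
  have : Continuous fun t : ℝ => a + t * b := by fun_prop
  apply this.continuousAt.eventually_const_lt
  simpa using ha

theorem ev_pos {N : ℕ} (x y : Fin n → Fin N → ℝ) (hx : ∀ i k, 0 ≤ x i k)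
    (hy : ∀ i k, x i k = 0 → 0 ≤ y i k) :
    ∀ᶠ t in nhdsWithin (0 : ℝ) (Set.Ioi 0), ∀ i k, 0 ≤ x i k + t * y i k ∧
      (x i k ≠ 0 → x i k + t * y i k ≠ 0) := by
  rw [Filter.eventually_all]; intro i
  rw [Filter.eventually_all]; intro k
  by_cases h : x i k = 0
  · filter_upwards [self_mem_nhdsWithin] with t ht
    refine ⟨?_, fun h' => absurd h h'⟩
    rw [h, zero_add]
    exact mul_nonneg (le_of_lt ht) (hy i k h)
  · have := ev_one (x i k) (y i k) (lt_of_le_of_ne (hx i k) (Ne.symm h))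
    filter_upwards [this.filter_mono nhdsWithin_le_nhds] with t ht
    exact ⟨ht.le, fun _ => ht.ne'⟩

theorem Opt.perturb {N : ℕ} {S : Setup n} {ε : ℝ} {U : ℝ → ℝ} {p : Fin N → ℝ}
    {x : Fin n → Fin N → ℝ} (h : Opt S ε U p x) (y : Fin n → Fin N → ℝ) (s : Fin N → ℝ)
    (hsup : ∀ i k, x i k = 0 → y i k = 0) (hrow : ∀ i, ∑ k, y i k = 0)
    (hd : ∀ k, cd S p y k = s k * cd S p x k) (hc : ∑ k, s k * |cd S p x k| = 0) :
    ∀ k, cm y k = 0 := by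
  have ev : ∀ᶠ t in nhds (0 : ℝ), (∀ i k, 0 ≤ x i k + t * y i k) ∧ ∀ k, 0 < 1 + t * s k := by
    refine Filter.Eventually.and ?_ ?_
    · rw [Filter.eventually_all]; intro i
      rw [Filter.eventually_all]; intro k
      by_cases h0 : x i k = 0
      · filter_upwards with t
        simp [h0, hsup i k h0]
      · exact (ev_one (x i k) (y i k) (lt_of_le_of_ne (h.feas.hx i k) (Ne.symm h0))).mono
          fun t ht => ht.le
    · rw [Filter.eventually_all]; intro k
      exact ev_one _ _ one_pos
  have key : ∀ t : ℝ, ((∀ i k, 0 ≤ x i k + t * y i k) ∧ ∀ k, 0 < 1 + t * s k) →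
      Feas S ε p (fun i k => x i k + t * y i k) ∧
        cst S p (fun i k => x i k + t * y i k) = cst S p x := by
    rintro t ⟨h1, h2⟩
    have hcst : cst S p (fun i k => x i k + t * y i k) = cst S p x := by
      simp only [cst, cd_lin]
      have : ∀ k, |cd S p x k + t * cd S p y k| = |cd S p x k| + t * (s k * |cd S p x k|) := by
        intro k
        rw [hd k, show cd S p x k + t * (s k * cd S p x k) = (1 + t * s k) * cd S p x k by ring,
          abs_mul, abs_of_pos (h2 k)]
        ring
      simp only [this, Finset.sum_add_distrib, ← Finset.mul_sum, hc]
      ring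
    exact ⟨⟨h.feas.hp, h1, row_lin S x y t h.feas.row hrow, hcst ▸ h.feas.cost⟩, hcst⟩
  obtain ⟨δ, hδ, hb⟩ := Metric.eventually_nhds_iff.1 ev
  have k1 := key (δ / 2) (hb (by simp [abs_of_pos hδ]; linarith))
  have k2 := key (-(δ / 2)) (hb (by simp [abs_of_pos hδ]; linarith))
  have p1 := h.h1 _ _ k1.1
  have p2 := h.h1 _ _ k2.1
  rw [pay_lin] at p1 p2
  have hp0 : pay U p y = 0 := by nlinarith
  have f1 := h.h3 _ _ k1.1 (by rw [pay_lin, hp0]; simp) k1.2.le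
  have f2 := h.h3 _ _ k2.1 (by rw [pay_lin, hp0]; simp) k2.2.le
  have hphi : phi (fun i k => x i k + δ / 2 * y i k) + phi (fun i k => x i k + -(δ / 2) * y i k)
      = 2 * phi x + 2 * (δ / 2) ^ 2 * phi y := by
    simp only [phi, cm_lin, Finset.mul_sum, ← Finset.sum_add_distrib]
    exact Finset.sum_congr rfl fun i _ => by ring
  have hy0 : phi y ≤ 0 := by
    have : 0 < 2 * (δ / 2) ^ 2 := by positivity
    by_contra hcon
    push Not at hcon
    nlinarith [mul_pos this hcon]
  intro k
  have hk : (cm y k) ^ 2 ≤ phi y :=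
    Finset.single_le_sum (f := fun k => (cm y k) ^ 2) (fun j _ => sq_nonneg _) (Finset.mem_univ k)
  have : (cm y k) ^ 2 = 0 := le_antisymm (hk.trans hy0) (sq_nonneg _)
  exact pow_eq_zero_iff (two_ne_zero) |>.1 this

theorem Opt.swap {N : ℕ} {S : Setup n} {ε : ℝ} {U : ℝ → ℝ} {p : Fin N → ℝ}
    {x : Fin n → Fin N → ℝ} (h : Opt S ε U p x) (y : Fin n → Fin N → ℝ)
    (hsup : ∀ i k, x i k = 0 → 0 ≤ y i k) (hrow : ∀ i, ∑ k, y i k = 0)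
    (hm : ∀ k, cm y k = 0) (hd : ∀ k, cd S p y k = 0) :
    ∀ i k, x i k = 0 → y i k = 0 := by
  obtain ⟨t, ht, ht0⟩ := ((ev_pos x y h.feas.hx hsup).and self_mem_nhdsWithin).exists
  have ht0 : 0 < t := ht0
  have hcst : cst S p (fun i k => x i k + t * y i k) = cst S p x := by
    simp [cst, cd_lin, hd]
  have hf : Feas S ε p (fun i k => x i k + t * y i k) :=
    ⟨h.feas.hp, fun i k => (ht i k).1, row_lin S x y t h.feas.row hrow, hcst ▸ h.feas.cost⟩
  have hc := h.h4 _ _ hf (by simp [pay, cm_lin, hm]) hcst.le (by simp [phi, cm_lin, hm])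
  have hsub : sup x ⊆ sup (fun i k => x i k + t * y i k) := by
    intro a ha
    simp only [sup, Finset.mem_filter, Finset.mem_univ, true_and] at ha ⊢
    exact (ht a.1 a.2).2 ha
  have heq := Finset.eq_of_subset_of_card_le hsub hc
  intro i k h0
  by_contra hy
  have : (i, k) ∈ sup x := by
    rw [heq]
    simp only [sup, Finset.mem_filter, Finset.mem_univ, true_and]
    rw [h0, zero_add]
    exact mul_ne_zero ht0.ne' hy
  simp [sup, h0] at this

theorem Opt.inj {N : ℕ} {S : Setup n} {ε : ℝ} {U : ℝ → ℝ} {p : Fin N → ℝ}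
    {x : Fin n → Fin N → ℝ} (h : Opt S ε U p x) (k l : Fin N) (hkl : k ≠ l)
    (hk : 0 < cm x k) (hl : 0 < cm x l) : p k ≠ p l := by
  intro hp
  let y : Fin n → Fin N → ℝ := fun i j => x i l * ((if j = k then 1 else 0) - (if j = l then 1 else 0))
  have hcm : ∀ j, cm y j = cm x l * ((if j = k then 1 else 0) - (if j = l then 1 else 0)) := by
    intro j; simp only [cm, y, Finset.sum_mul]
  have hrow : ∀ i, ∑ j, y i j = 0 := by
    intro i; simp [y, ← Finset.mul_sum]
  have hcd : ∀ j, cd S p y j = cd S p x l * ((if j = k then 1 else 0) - (if j = l then 1 else 0)) := by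
    intro j
    simp only [cd, y, Finset.sum_mul]
    refine Finset.sum_congr rfl fun i _ => ?_
    by_cases h1 : j = k
    · subst h1; rw [hp]; ring
    · by_cases h2 : j = l
      · subst h2; ring
      · simp [h1, h2]
  have hcst : cst S p (fun i k => x i k + 1 * y i k) ≤ cst S p x := by
    have : ∀ j, |cd S p (fun i k => x i k + 1 * y i k) j| ≤ |cd S p x j| + |cd S p x l| *
        ((if j = k then 1 else 0) - (if j = l then 1 else 0)) := by
      intro j
      rw [cd_lin, hcd]
      by_cases h1 : j = k
      · subst h1; simpa [hkl] using abs_add_le _ _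
      · by_cases h2 : j = l
        · subst h2; simp [h1]
        · simp [h1, h2]
    refine (Finset.sum_le_sum fun j _ => this j).trans ?_
    simp [Finset.sum_add_distrib, ← Finset.mul_sum, cst]
  have hf : Feas S ε p (fun i k => x i k + 1 * y i k) := by
    refine ⟨h.feas.hp, ?_, row_lin S x y 1 h.feas.row hrow, hcst.trans h.feas.cost⟩
    intro i j
    simp only [y]
    have a1 := h.feas.hx i j
    have a2 := h.feas.hx i l
    by_cases h1 : j = k
    · subst h1; simp [hkl]; linarith
    · by_cases h2 : j = l
      · subst h2; simp [h1]
      · simpa [h1, h2] using a1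
  have hpay : pay U p y = 0 := by
    simp only [pay, hcm]
    have : ∀ j, cm x l * ((if j = k then 1 else 0) - (if j = l then 1 else 0)) * U (p j) =
      cm x l * U (p l) * ((if j = k then 1 else 0) - (if j = l then 1 else 0)) := by
      intro j
      by_cases h1 : j = k
      · subst h1; rw [hp]; ring
      · by_cases h2 : j = l
        · subst h2; ring
        · simp [h1, h2]
    simp [this, ← Finset.mul_sum]
  have h3 := h.h3 _ _ hf (by rw [pay_lin, hpay]; simp) hcst
  have hphi : phi (fun i k => x i k + 1 * y i k) = phi x + 2 * cm x k * cm x l := by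
    simp only [phi, cm_lin, hcm]
    have : ∀ j, (cm x j + 1 * (cm x l * ((if j = k then 1 else 0) - (if j = l then 1 else 0)))) ^ 2
      = cm x j ^ 2 + (2 * cm x k * cm x l + cm x l ^ 2) * (if j = k then 1 else 0)
        - cm x l ^ 2 * (if j = l then 1 else 0) := by
      intro j
      by_cases h1 : j = k
      · subst h1; simp [hkl]; ring
      · by_cases h2 : j = l
        · subst h2; simp [h1]
        · simp [h1, h2]
    simp only [this, Finset.sum_add_distrib, Finset.sum_sub_distrib, ← Finset.mul_sum]
    simp
    ring
  rw [hphi] at h3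
  nlinarith [mul_pos hk hl]

def kp {N : ℕ} (S : Setup n) (x : Fin n → Fin N → ℝ) (k : Fin N) : ℝ :=
  (∑ i, x i k * S.theta i) / cm x k

theorem kp_mul {N : ℕ} (S : Setup n) (x : Fin n → Fin N → ℝ) (k : Fin N) (hk : cm x k ≠ 0) :
    ∑ i, x i k * S.theta i = cm x k * kp S x k := by
  unfold kp; field_simp

theorem cd_eq {N : ℕ} (S : Setup n) (p : Fin N → ℝ) (x : Fin n → Fin N → ℝ) (k : Fin N)
    (hk : cm x k ≠ 0) : cd S p x k = cm x k * (kp S x k - p k) := by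
  rw [mul_sub, ← kp_mul S x k hk]
  simp only [cd, mul_sub, Finset.sum_sub_distrib, ← Finset.sum_mul, cm]

/-- The exchange direction between columns `k` and `l`. -/
def exch {N : ℕ} (w : Fin n → ℝ) (k l : Fin N) (i : Fin n) (j : Fin N) : ℝ :=
  w i * ((if j = l then 1 else 0) - (if j = k then 1 else 0))

theorem exch_row {N : ℕ} (w : Fin n → ℝ) (k l : Fin N) (i : Fin n) :
    ∑ j, exch w k l i j = 0 := by
  simp [exch, ← Finset.mul_sum]

theorem exch_cm {N : ℕ} (w : Fin n → ℝ) (k l : Fin N) (hw : ∑ i, w i = 0) (j : Fin N) :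
    cm (exch w k l) j = 0 := by
  simp only [cm, exch, ← Finset.sum_mul, hw, zero_mul]

theorem exch_cd {N : ℕ} (S : Setup n) (p : Fin N → ℝ) (w : Fin n → ℝ) (k l : Fin N)
    (hw : ∑ i, w i = 0) (j : Fin N) :
    cd S p (exch w k l) j = (∑ i, w i * S.theta i) *
      ((if j = l then 1 else 0) - (if j = k then 1 else 0)) := by
  have : ∀ i, exch w k l i j * (S.theta i - p j) =
      (w i * S.theta i) * ((if j = l then 1 else 0) - (if j = k then 1 else 0)) -
      w i * (p j * ((if j = l then 1 else 0) - (if j = k then 1 else 0))) := by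
    intro i; simp only [exch]; ring
  simp only [cd, this, Finset.sum_sub_distrib, ← Finset.sum_mul, hw, zero_mul, sub_zero]

def mixw {N : ℕ} (x : Fin n → Fin N → ℝ) (k l : Fin N) (i : Fin n) : ℝ :=
  x i k / cm x k - x i l / cm x l

theorem mixw_sum {N : ℕ} (x : Fin n → Fin N → ℝ) (k l : Fin N) (hk : 0 < cm x k)
    (hl : 0 < cm x l) : ∑ i, mixw x k l i = 0 := by
  simp only [mixw, Finset.sum_sub_distrib, ← Finset.sum_div]
  rw [show ∑ i, x i k = cm x k from rfl, show ∑ i, x i l = cm x l from rfl, div_self hk.ne',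
    div_self hl.ne', sub_self]

theorem mixw_mom {N : ℕ} (S : Setup n) (x : Fin n → Fin N → ℝ) (k l : Fin N) :
    ∑ i, mixw x k l i * S.theta i = kp S x k - kp S x l := by
  simp only [mixw, sub_mul, Finset.sum_sub_distrib, kp, Finset.sum_div]
  congr 1 <;> exact Finset.sum_congr rfl fun i _ => by ring

theorem mixw_nonneg {N : ℕ} (x : Fin n → Fin N → ℝ) (hx : ∀ i k, 0 ≤ x i k) (k l : Fin N)
    (hkl : k ≠ l) (hk : 0 < cm x k) (hl : 0 < cm x l) (i : Fin n) (j : Fin N)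
    (h0 : x i j = 0) : 0 ≤ exch (mixw x k l) k l i j := by
  have a1 := div_nonneg (hx i k) hk.le
  have a2 := div_nonneg (hx i l) hl.le
  simp only [exch, mixw]
  by_cases h1 : j = k
  · subst h1; simpa [hkl, h0] using a2
  · by_cases h2 : j = l
    · subst h2; simpa [h1, h0] using a1
    · simp [h1, h2]

theorem Opt.supp_eq {N : ℕ} {S : Setup n} {ε : ℝ} {U : ℝ → ℝ} {p : Fin N → ℝ}
    {x : Fin n → Fin N → ℝ} (h : Opt S ε U p x) (k l : Fin N)
    (hk : 0 < cm x k) (hl : 0 < cm x l) (hq : kp S x k = kp S x l) (i : Fin n)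
    (hi : x i l = 0) : x i k = 0 := by
  by_cases hkl : k = l
  · rw [hkl]; exact hi
  have hs := mixw_sum x k l hk hl
  have := h.swap (exch (mixw x k l) k l) (fun i j h0 => mixw_nonneg x h.feas.hx k l hkl hk hl i j h0)
    (exch_row _ _ _) (exch_cm _ _ _ hs)
    (fun j => by rw [exch_cd S p _ k l hs, mixw_mom, hq]; simp) i l hi
  simp only [exch, mixw, hi] at this
  have hlk : l ≠ k := Ne.symm hkl
  simpa [hlk, hk.ne'] using this

theorem Opt.sep {N : ℕ} {S : Setup n} {ε : ℝ} {U : ℝ → ℝ} {p : Fin N → ℝ}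
    {x : Fin n → Fin N → ℝ} (h : Opt S ε U p x) (k l : Fin N)
    (hk : 0 < cm x k) (hl : 0 < cm x l) (hqk : p k < kp S x k) (hql : kp S x l < p l) :
    p k < p l := by
  by_contra hcon
  push Not at hcon
  have hkl : k ≠ l := by rintro rfl; linarith
  have hs := mixw_sum x k l hk hl
  have e1 := ev_pos x (exch (mixw x k l) k l) h.feas.hx
    (fun i j h0 => mixw_nonneg x h.feas.hx k l hkl hk hl i j h0)
  have dk : 0 < cd S p x k := by rw [cd_eq S p x k hk.ne']; exact mul_pos hk (by linarith)
  have dl : cd S p x l < 0 := by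
    rw [cd_eq S p x l hl.ne']; exact mul_neg_of_pos_of_neg hl (by linarith)
  have e2 := (ev_one (cd S p x k) (-(kp S x k - kp S x l)) dk).filter_mono
    (nhdsWithin_le_nhds (s := Set.Ioi 0))
  have e3 := (ev_one (-cd S p x l) (-(kp S x k - kp S x l)) (by linarith)).filter_mono
    (nhdsWithin_le_nhds (s := Set.Ioi 0))
  obtain ⟨t, ⟨⟨ht, ht2⟩, ht3⟩, ht0⟩ := (((e1.and e2).and e3).and self_mem_nhdsWithin).exists
  have ht0 : 0 < t := ht0
  have hD : 0 < t * (kp S x k - kp S x l) := mul_pos ht0 (by linarith)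
  have hc : cst S p (fun i j => x i j + t * exch (mixw x k l) k l i j) =
      cst S p x - 2 * (t * (kp S x k - kp S x l)) := by
    have : ∀ j, |cd S p (fun i j => x i j + t * exch (mixw x k l) k l i j) j| =
        |cd S p x j| - t * (kp S x k - kp S x l) * (if j = k then 1 else 0)
        - t * (kp S x k - kp S x l) * (if j = l then 1 else 0) := by
      intro j
      rw [cd_lin, exch_cd S p _ k l hs, mixw_mom]
      by_cases h1 : j = k
      · subst h1
        simp only [hkl, if_true, if_false]
        rw [abs_of_pos dk, abs_of_pos (by linarith)]; ring
      · by_cases h2 : j = l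
        · subst h2
          simp only [h1, if_true, if_false]
          rw [abs_of_neg dl, abs_of_neg (by linarith)]; ring
        · simp [h1, h2]
    simp only [cst, this, Finset.sum_sub_distrib, ← Finset.mul_sum]
    simp
    ring
  have hf : Feas S ε p (fun i j => x i j + t * exch (mixw x k l) k l i j) :=
    ⟨h.feas.hp, fun i j => (ht i j).1, row_lin S x _ t h.feas.row (exch_row _ _ _),
      by rw [hc]; linarith [h.feas.cost]⟩
  have := h.h2 _ _ hf (by simp [pay, cm_lin, exch_cm _ k l hs])
  rw [hc] at this
  linarith

theorem rel {κ D : Type} [Fintype κ] [DecidableEq κ] [Fintype D] (T : Finset κ) (v : κ → D → ℝ)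
    (h : Fintype.card D < T.card) :
    ∃ c : κ → ℝ, (∀ k, k ∉ T → c k = 0) ∧ (∃ k ∈ T, c k ≠ 0) ∧ ∀ d, ∑ k, c k * v k d = 0 := by
  have hn : ¬ LinearIndependent ℝ (fun k : T => v k.1) := by
    intro hl
    have := hl.fintype_card_le_finrank
    simp at this
    omega
  obtain ⟨g, hg, ⟨k0, hk0⟩, hne⟩ := Fintype.not_linearIndependent_iff.1 hn
  refine ⟨fun k => if hk : k ∈ T then g ⟨k, hk⟩ else 0, fun k hk => by simp [hk],
    ⟨k0, hk0, by simpa [hk0] using hne⟩, fun d => ?_⟩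
  have h1 := congrFun hg d
  simp only [Finset.sum_apply, Pi.smul_apply, smul_eq_mul, Pi.zero_apply] at h1
  refine Eq.trans ?_ h1
  rw [← Finset.sum_subset (Finset.subset_univ T) (fun k _ hk => by simp [hk]),
    ← Finset.sum_coe_sort T]
  exact Finset.sum_congr rfl fun k _ => by simp

theorem Opt.card_le {N : ℕ} {S : Setup n} {ε : ℝ} {U : ℝ → ℝ} {p : Fin N → ℝ}
    {x : Fin n → Fin N → ℝ} (h : Opt S ε U p x) :
    (Finset.univ.filter fun k => 0 < cm x k).card ≤ n + 1 := by
  by_contra hcon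
  push Not at hcon
  obtain ⟨c, hc0, ⟨k, hkT, hk⟩, hc⟩ := rel (D := Option (Fin n))
    (Finset.univ.filter fun k => 0 < cm x k)
    (fun k d => d.elim |cd S p x k| (fun i => x i k)) (by simpa using hcon)
  have := h.perturb (fun i k => c k * x i k) c (fun i k h0 => by simp [h0])
    (fun i => by simpa using hc (some i)) (fun k => by
      simp only [cd, Finset.mul_sum]
      exact Finset.sum_congr rfl fun i _ => by ring) (by simpa using hc none) k
  simp only [cm, ← Finset.mul_sum] at this
  have hkT' : 0 < cm x k := by simpa using hkT
  exact mul_ne_zero hk hkT'.ne' this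

/-- Perturbation through columns with prescribed mass and unchanged means. -/
theorem Opt.perturb' {N : ℕ} {S : Setup n} {ε : ℝ} {U : ℝ → ℝ} {p : Fin N → ℝ}
    {x : Fin n → Fin N → ℝ} (h : Opt S ε U p x) (c : Fin N → ℝ) (r : Fin n → Fin N → ℝ)
    (hc : ∀ k, c k ≠ 0 → 0 < cm x k ∧ ∑ i, r i k = 1 ∧ ∑ i, r i k * S.theta i = kp S x k ∧
      ∀ i, x i k = 0 → r i k = 0)
    (hrow : ∀ i, ∑ k, c k * r i k = 0) (hcost : ∑ k, c k * |kp S x k - p k| = 0) :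
    ∀ k, c k = 0 := by
  have hcm : ∀ k, cm (fun i k => c k * r i k) k = c k := by
    intro k
    by_cases h0 : c k = 0
    · simp [cm, h0]
    · simp only [cm, ← Finset.mul_sum, (hc k h0).2.1, mul_one]
  intro k
  rw [← hcm k]
  refine h.perturb (fun i k => c k * r i k) (fun k => c k / cm x k) ?_ hrow ?_ ?_ k
  · intro i k h0
    by_cases hk : c k = 0
    · simp [hk]
    · simp [(hc k hk).2.2.2 i h0]
  · intro k
    by_cases hk : c k = 0
    · simp [cd, hk]
    · obtain ⟨a, b, d, e⟩ := hc k hk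
      rw [cd_eq S p x k a.ne']
      have : cd S p (fun i k => c k * r i k) k = c k * (kp S x k - p k) := by
        rw [← d]
        have : ∑ i, r i k * S.theta i - p k = ∑ i, r i k * (S.theta i - p k) := by
          simp only [mul_sub, Finset.sum_sub_distrib, ← Finset.sum_mul, b, one_mul]
        rw [this, Finset.mul_sum]
        exact Finset.sum_congr rfl fun i _ => by ring
      rw [this]
      field_simp
  · rw [← hcost]
    refine Finset.sum_congr rfl fun k _ => ?_
    by_cases hk : c k = 0
    · simp [hk]
    · have a := (hc k hk).1
      rw [cd_eq S p x k a.ne', abs_mul, abs_of_pos a]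
      field_simp

theorem Opt.no3 {N : ℕ} {S : Setup n} {ε : ℝ} {U : ℝ → ℝ} {p : Fin N → ℝ}
    {x : Fin n → Fin N → ℝ} (h : Opt S ε U p x) (q : ℝ) :
    (Finset.univ.filter fun k => 0 < cm x k ∧ kp S x k = q).card ≤ 2 := by
  by_contra hcon
  push Not at hcon
  obtain ⟨k0, hk0⟩ : (Finset.univ.filter fun k => 0 < cm x k ∧ kp S x k = q).Nonempty := by
    rw [← Finset.card_pos]; omega
  simp only [Finset.mem_filter, Finset.mem_univ, true_and] at hk0
  obtain ⟨c, hc0, ⟨k, hkT, hk⟩, hc⟩ := rel (D := Fin 2)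
    (Finset.univ.filter fun k => 0 < cm x k ∧ kp S x k = q)
    (fun k => ![1, |kp S x k - p k|]) (by simpa using hcon)
  have c0 := hc 0
  have c1 := hc 1
  simp only [Matrix.cons_val_zero, mul_one, Matrix.cons_val_one] at c0 c1
  refine hk (h.perturb' c (fun i _ => x i k0 / cm x k0) ?_ ?_ c1 k)
  · intro j hj
    have hjT : j ∈ (Finset.univ.filter fun k => 0 < cm x k ∧ kp S x k = q) := by
      by_contra hn; exact hj (hc0 j hn)
    simp only [Finset.mem_filter, Finset.mem_univ, true_and] at hjT
    refine ⟨hjT.1, ?_, ?_, ?_⟩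
    · rw [← Finset.sum_div]; exact div_self hk0.1.ne'
    · rw [hjT.2, ← hk0.2, kp, Finset.sum_div]
      exact Finset.sum_congr rfl fun i _ => by ring
    · intro i hi
      rw [h.supp_eq k0 j hk0.1 hjT.1 (hk0.2.trans hjT.2.symm) i hi, zero_div]
  · intro i
    rw [← Finset.sum_mul, c0, zero_mul]

theorem exists_low {N : ℕ} (S : Setup n) (x : Fin n → Fin N → ℝ) (hx : ∀ i k, 0 ≤ x i k)
    (k : Fin N) (hk : 0 < cm x k) (σ a : ℝ) (h : 0 < σ * (a - kp S x k)) :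
    ∃ j, x j k ≠ 0 ∧ 0 < σ * (a - S.theta j) := by
  by_contra hcon
  push Not at hcon
  have h1 : ∑ j, x j k * (σ * (a - S.theta j)) ≤ 0 := by
    refine Finset.sum_nonpos fun j _ => ?_
    by_cases h0 : x j k = 0
    · simp [h0]
    · exact mul_nonpos_of_nonneg_of_nonpos (hx j k) (hcon j h0)
  have h2 : ∑ j, x j k * (σ * (a - S.theta j)) = cm x k * (σ * (a - kp S x k)) := by
    have : ∀ j, x j k * (σ * (a - S.theta j)) = x j k * (σ * a) - (x j k * S.theta j) * σ := by
      intro j; ring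
    simp only [this, Finset.sum_sub_distrib, ← Finset.sum_mul]
    rw [kp_mul S x k hk.ne', show ∑ i, x i k = cm x k from rfl]
    ring
  have := mul_pos hk h
  linarith

theorem cm_pos {N : ℕ} (x : Fin n → Fin N → ℝ) (hx : ∀ i k, 0 ≤ x i k) (i : Fin n) (k : Fin N)
    (h : x i k ≠ 0) : 0 < cm x k :=
  Finset.sum_pos' (fun j _ => hx j k) ⟨i, Finset.mem_univ i, lt_of_le_of_ne (hx i k) (Ne.symm h)⟩

theorem Opt.side {N : ℕ} {S : Setup n} {ε : ℝ} {U : ℝ → ℝ} {p : Fin N → ℝ}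
    {x : Fin n → Fin N → ℝ} (h : Opt S ε U p x) (i : Fin n) (σ : ℝ) (hσ : σ * σ = 1) :
    ∃ b : Fin n → ℝ, ∑ j, b j = 0 ∧ ∀ k, x i k ≠ 0 → 0 < σ * (S.theta i - kp S x k) →
      (∑ j, b j * S.theta j = -σ ∧ ∀ j, x j k = 0 → b j = 0) := by
  classical
  have hx := h.feas.hx
  set J : Finset (Fin n) := Finset.univ.filter fun j => ∃ k, x i k ≠ 0 ∧
    0 < σ * (S.theta i - kp S x k) ∧ x j k ≠ 0 with hJ
  by_cases hne : J.Nonempty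
  swap
  · refine ⟨0, by simp, fun k h1 h2 => ?_⟩
    exact absurd ⟨i, by rw [hJ]; simp only [Finset.mem_filter, Finset.mem_univ, true_and]; exact ⟨k, h1, h2, h1⟩⟩ hne
  obtain ⟨j0, hj0, hmin⟩ := Finset.exists_min_image J (fun j => σ * S.theta j) hne
  obtain ⟨k0, hk1, hk2, hk3⟩ : ∃ k, x i k ≠ 0 ∧
    0 < σ * (S.theta i - kp S x k) ∧ x j0 k ≠ 0 := by simpa [hJ] using hj0
  have hlow : ∀ k, x i k ≠ 0 → 0 < σ * (S.theta i - kp S x k) →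
      ∃ j, x j k ≠ 0 ∧ 0 < σ * (S.theta i - S.theta j) ∧ σ * S.theta j0 ≤ σ * S.theta j := by
    intro k h1 h2
    obtain ⟨j, a, b⟩ := exists_low S x hx k (cm_pos x hx i k h1) σ _ h2
    refine ⟨j, a, b, hmin j ?_⟩
    rw [hJ]; simp only [Finset.mem_filter, Finset.mem_univ, true_and]; exact ⟨k, h1, h2, a⟩
  have hpos : 0 < σ * (S.theta i - S.theta j0) := by
    obtain ⟨j, _, b, c⟩ := hlow k0 hk1 hk2
    nlinarith
  have hij : i ≠ j0 := by rintro rfl; simp at hpos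
  have hcommon : ∀ k, x i k ≠ 0 → 0 < σ * (S.theta i - kp S x k) → x j0 k ≠ 0 := by
    intro k h1 h2 h0
    obtain ⟨j, a, b, c⟩ := hlow k h1 h2
    have hkk : k0 ≠ k := by rintro rfl; exact hk3 h0
    have hjj : j0 ≠ j := by rintro rfl; exact a h0
    set β := (σ * (S.theta i - S.theta j)) / (σ * (S.theta i - S.theta j0)) with hβ
    have hβ0 : 0 < β := div_pos b hpos
    have hβ1 : β ≤ 1 := by rw [hβ, div_le_one hpos]; nlinarith
    have hβm : β * (S.theta i - S.theta j0) = S.theta i - S.theta j := by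
      have hσ0 : σ ≠ 0 := by rintro rfl; simp at hσ
      have : S.theta i - S.theta j0 ≠ 0 := by intro h'; simp [h'] at hpos
      rw [hβ]; field_simp
    let w : Fin n → ℝ := fun i' => β * (if i' = j0 then 1 else 0) +
      (1 - β) * (if i' = i then 1 else 0) - (if i' = j then 1 else 0)
    have hw : ∑ i', w i' = 0 := by
      simp [w, Finset.sum_sub_distrib, Finset.sum_add_distrib, ← Finset.mul_sum]
    have hwm : ∑ i', w i' * S.theta i' = 0 := by
      simp [w, sub_mul, add_mul, mul_assoc, Finset.sum_sub_distrib, Finset.sum_add_distrib,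
        ← Finset.mul_sum]
      linarith
    have hsup : ∀ i' l, x i' l = 0 → 0 ≤ exch w k0 k i' l := by
      intro i' l h'
      by_cases e1 : l = k
      · subst e1
        have hne : i' ≠ j := by rintro rfl; exact a h'
        simp only [exch, w, if_true, hkk.symm, if_false, hne, sub_zero, mul_one]
        have : 0 ≤ 1 - β := by linarith
        positivity
      · by_cases e2 : l = k0
        · subst e2
          have n1 : i' ≠ j0 := by rintro rfl; exact hk3 h'
          have n2 : i' ≠ i := by rintro rfl; exact hk1 h'
          simp only [exch, w, e1, n1, n2, if_true, if_false]
          split_ifs <;> norm_num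
        · simp [exch, e1, e2]
    have := h.swap (exch w k0 k) hsup (exch_row _ _ _) (exch_cm _ _ _ hw)
      (fun l => by rw [exch_cd S p _ k0 k hw, hwm, zero_mul]) j0 k h0
    simp only [exch, w, if_true, hkk.symm, if_false, hjj, hij.symm] at this
    linarith
  refine ⟨fun j => ((if j = j0 then 1 else 0) - (if j = i then 1 else 0)) /
    (σ * (S.theta i - S.theta j0)), ?_, fun k h1 h2 => ⟨?_, ?_⟩⟩
  · simp [← Finset.sum_div, Finset.sum_sub_distrib]
  · have : ∀ j, ((if j = j0 then (1 : ℝ) else 0) - (if j = i then 1 else 0)) /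
      (σ * (S.theta i - S.theta j0)) * S.theta j = ((if j = j0 then (1 : ℝ) else 0) * S.theta j
        - (if j = i then 1 else 0) * S.theta j) / (σ * (S.theta i - S.theta j0)) := by
      intro j; ring
    simp only [this, ← Finset.sum_div, Finset.sum_sub_distrib]
    simp only [ite_mul, one_mul, zero_mul, Finset.sum_ite_eq', Finset.mem_univ, if_true]
    rw [div_eq_iff hpos.ne']
    linear_combination (S.theta i - S.theta j0) * hσ
  · intro j hj
    have n1 : j ≠ j0 := by rintro rfl; exact hcommon k h1 h2 hj
    have n2 : j ≠ i := by rintro rfl; exact h1 hj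
    simp [n1, n2]

theorem Opt.four {N : ℕ} {S : Setup n} {ε : ℝ} {U : ℝ → ℝ} {p : Fin N → ℝ}
    {x : Fin n → Fin N → ℝ} (h : Opt S ε U p x) (i : Fin n) :
    (Finset.univ.filter fun k => x i k ≠ 0).card ≤ 4 := by
  by_contra hcon
  push Not at hcon
  obtain ⟨bL, hL0, hL⟩ := h.side i 1 (by norm_num)
  obtain ⟨bR, hR0, hR⟩ := h.side i (-1) (by norm_num)
  set a := S.theta i with ha
  let uL : Fin N → ℝ := fun k => max (a - kp S x k) 0
  let uR : Fin N → ℝ := fun k => max (kp S x k - a) 0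
  obtain ⟨c, hc0, ⟨k, hkT, hk⟩, hc⟩ := rel (D := Fin 4)
    (Finset.univ.filter fun k => x i k ≠ 0)
    (fun k => ![1, uL k, uR k, |kp S x k - p k|]) (by simpa using hcon)
  have c0 : ∑ k, c k = 0 := by simpa using hc 0
  have c1 : ∑ k, c k * uL k = 0 := by simpa using hc 1
  have c2 : ∑ k, c k * uR k = 0 := by simpa using hc 2
  have c3 : ∑ k, c k * |kp S x k - p k| = 0 := by simpa using hc 3
  refine hk (h.perturb' c (fun j k => (if j = i then 1 else 0) + uL k * bL j + uR k * bR j)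
    ?_ ?_ c3 k)
  · intro l hl
    have hlT : x i l ≠ 0 := by
      by_contra hn; exact hl (hc0 l (by simpa using hn))
    refine ⟨cm_pos x h.feas.hx i l hlT, ?_, ?_, ?_⟩
    · simp [Finset.sum_add_distrib, ← Finset.mul_sum, hL0, hR0]
    · have e : ∑ j, ((if j = i then 1 else 0) + uL l * bL j + uR l * bR j) * S.theta j =
          a + uL l * ∑ j, bL j * S.theta j + uR l * ∑ j, bR j * S.theta j := by
        simp [add_mul, Finset.sum_add_distrib, Finset.mul_sum, mul_assoc, ha]
      rw [e]
      rcases lt_trichotomy (kp S x l) a with h1 | h1 | h1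
      · rw [(hL l hlT (by linarith)).1, show uL l = a - kp S x l from max_eq_left (by linarith),
          show uR l = 0 from max_eq_right (by linarith)]
        ring
      · simp [uL, uR, h1]
      · rw [(hR l hlT (by linarith)).1, show uR l = kp S x l - a from max_eq_left (by linarith),
          show uL l = 0 from max_eq_right (by linarith)]
        ring
    · intro j hj
      have hji : j ≠ i := by rintro rfl; exact hlT hj
      have t1 : uL l * bL j = 0 := by
        by_cases h1 : kp S x l < a
        · rw [(hL l hlT (by linarith)).2 j hj, mul_zero]
        · rw [show uL l = 0 from max_eq_right (by linarith), zero_mul]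
      have t2 : uR l * bR j = 0 := by
        by_cases h1 : a < kp S x l
        · rw [(hR l hlT (by linarith)).2 j hj, mul_zero]
        · rw [show uR l = 0 from max_eq_right (by linarith), zero_mul]
      simp [hji, t1, t2]
  · intro j
    have : ∀ k, c k * ((if j = i then 1 else 0) + uL k * bL j + uR k * bR j) =
        c k * (if j = i then 1 else 0) + (c k * uL k) * bL j + (c k * uR k) * bR j := by
      intro k; ring
    simp only [this, Finset.sum_add_distrib, ← Finset.sum_mul, c0, c1, c2]
    ring

theorem ECE_one (S : Setup n) (f : Fin n → ℝ →₀ ℝ) :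
    ECE S 1 f = ∑ p ∈ suppF f, marginal S f p * |kappa S f p - p| := by
  simp [ECE]

theorem sum_supp (f : Fin n → ℝ →₀ ℝ) (i : Fin n) (T : Finset ℝ) (hT : suppF f ⊆ T) (g : ℝ → ℝ) :
    ∑ q ∈ (f i).support, f i q * g q = ∑ q ∈ T, f i q * g q := by
  refine Finset.sum_subset ?_ ?_
  · intro q hq
    exact hT (Finset.mem_biUnion.2 ⟨i, Finset.mem_univ i, hq⟩)
  · intro q _ hq
    rw [Finsupp.notMem_support_iff.1 hq, zero_mul]

theorem payoff_eq (S : Setup n) (U : ℝ → ℝ) (f : Fin n → ℝ →₀ ℝ) (T : Finset ℝ)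
    (hT : suppF f ⊆ T) : payoffEI S U f = ∑ q ∈ T, marginal S f q * U q := by
  simp only [payoffEI, payoff, sum_supp f _ T hT U, marginal, Finset.mul_sum, Finset.sum_mul]
  rw [Finset.sum_comm]
  exact Finset.sum_congr rfl fun q _ => Finset.sum_congr rfl fun i _ => by ring

theorem embed (S : Setup n) (ε : ℝ) (U : ℝ → ℝ) (f : Fin n → ℝ →₀ ℝ) (hf : IsPredictor f)
    (hE : ECE S 1 f ≤ ε) :
    ∃ (p : Fin (n + 3) → ℝ) (x : Fin n → Fin (n + 3) → ℝ), Feas S ε p x ∧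
      pay U p x = payoffEI S U f := by
  classical
  set T := suppF f with hT
  let W : ℝ → ℝ := marginal S f
  have hW : ∀ q ∈ T, 0 < W q := by
    intro q hq
    obtain ⟨i, _, hi⟩ := Finset.mem_biUnion.1 hq
    refine Finset.sum_pos' (fun j _ => mul_nonneg (S.lam_pos j).le ((hf j).1 q))
      ⟨i, Finset.mem_univ i, mul_pos (S.lam_pos i) (lt_of_le_of_ne ((hf i).1 q) ?_)⟩
    exact (Finsupp.mem_support_iff.1 hi).symm
  have hTI : ∀ q ∈ T, q ∈ Set.Icc (0 : ℝ) 1 := by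
    intro q hq
    obtain ⟨i, _, hi⟩ := Finset.mem_biUnion.1 hq
    exact (hf i).2.1 q hi
  have hf1 : ∀ i, ∑ q ∈ T, f i q = 1 := by
    intro i
    have := sum_supp f i T (le_refl _) (fun _ => 1)
    simp only [mul_one] at this
    rw [← this]; exact (hf i).2.2
  let v : ℝ → (Fin n → ℝ) × ℝ × ℝ := fun q =>
    ((fun i => S.lam i * f i q / W q), |kappa S f q - q|, U q)
  have hWs : ∑ q ∈ T, W q = 1 := by
    simp only [W, marginal]
    rw [Finset.sum_comm]
    simp only [← Finset.mul_sum, hf1, mul_one, S.lam_sum]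
  have hmem : ∑ q ∈ T, W q • v q ∈ convexHull ℝ (v '' (T : Set ℝ)) := by
    refine (convex_convexHull ℝ _).sum_mem (fun q hq => (hW q hq).le) hWs fun q hq => ?_
    exact subset_convexHull ℝ _ ⟨q, hq, rfl⟩
  obtain ⟨ι, _, z, w, hz, hai, hw, hws, hsum⟩ := eq_pos_convex_span_of_mem_convexHull hmem
  have hcard : Fintype.card ι ≤ Fintype.card (Fin (n + 3)) := by
    have h1 := hai.card_le_finrank_succ
    have h2 := Submodule.finrank_le (vectorSpan ℝ (Set.range z))
    have h3 : Module.finrank ℝ ((Fin n → ℝ) × ℝ × ℝ) = n + 2 := by simp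
    simp only [Fintype.card_fin]
    omega
  obtain ⟨e⟩ := Function.Embedding.nonempty_of_card_le hcard
  have hpp : ∀ a, ∃ q, q ∈ T ∧ v q = z a := fun a => hz ⟨a, rfl⟩
  choose pp hppT hppz using hpp
  have hsumE : ∀ g : Fin (n + 3) → ℝ, (∀ k, k ∉ Set.range e → g k = 0) →
      ∑ k, g k = ∑ a, g (e a) := fun g hg =>
    (Fintype.sum_of_injective e e.injective _ g hg fun _ => rfl).symm
  let p : Fin (n + 3) → ℝ := Function.extend e pp 0
  let x : Fin n → Fin (n + 3) → ℝ := fun i =>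
    Function.extend e (fun a => w a * (S.lam i * f i (pp a) / W (pp a))) 0
  have pe : ∀ a, p (e a) = pp a := fun a => e.injective.extend_apply _ _ _
  have xe : ∀ i a, x i (e a) = w a * (S.lam i * f i (pp a) / W (pp a)) :=
    fun i a => e.injective.extend_apply _ _ _
  have pn : ∀ k, k ∉ Set.range e → p k = 0 := fun k hk =>
    Function.extend_apply' _ _ _ (by simpa using hk)
  have xn : ∀ i k, k ∉ Set.range e → x i k = 0 := fun i k hk =>
    Function.extend_apply' _ _ _ (by simpa using hk)
  have cmn : ∀ k, k ∉ Set.range e → cm x k = 0 := fun k hk => by simp [cm, xn _ k hk]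
  have cdn : ∀ k, k ∉ Set.range e → cd S p x k = 0 := fun k hk => by simp [cd, xn _ k hk]
  have cme : ∀ a, cm x (e a) = w a := by
    intro a
    have hWa := hW _ (hppT a)
    simp only [cm, xe, ← Finset.mul_sum, ← Finset.sum_div]
    rw [show ∑ i, S.lam i * f i (pp a) = W (pp a) from rfl, div_self hWa.ne', mul_one]
  have cde : ∀ a, cd S p x (e a) = w a * (kappa S f (pp a) - pp a) := by
    intro a
    have hWa := hW _ (hppT a)
    have h1 : ∑ i, x i (e a) * S.theta i = w a * kappa S f (pp a) := by
      simp only [xe, kappa, Finset.sum_div, Finset.mul_sum]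
      exact Finset.sum_congr rfl fun i _ => by simp only [W]; ring
    have h2 : ∑ i, x i (e a) = w a := cme a
    simp only [cd, mul_sub, Finset.sum_sub_distrib, ← Finset.sum_mul, h1, h2, pe]
  have s1 : ∀ i, ∑ a, w a * (S.lam i * f i (pp a) / W (pp a)) = S.lam i := by
    intro i
    have h1 := congrFun (congrArg Prod.fst hsum) i
    simp only [Prod.fst_sum, Finset.sum_apply, Prod.smul_fst, Pi.smul_apply, smul_eq_mul,
      ← hppz] at h1
    simp only [v] at h1
    rw [h1]
    have : ∀ q ∈ T, W q * (S.lam i * f i q / W q) = S.lam i * f i q := by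
      intro q hq
      have := (hW q hq).ne'
      field_simp
    rw [Finset.sum_congr rfl this, ← Finset.mul_sum, hf1, mul_one]
  have s2 : ∑ a, w a * |kappa S f (pp a) - pp a| = ∑ q ∈ T, W q * |kappa S f q - q| := by
    have h1 := congrArg (fun z => z.2.1) hsum
    simpa only [Prod.snd_sum, Prod.fst_sum, Prod.smul_snd, Prod.smul_fst, smul_eq_mul,
      ← hppz, v] using h1
  have s3 : ∑ a, w a * U (pp a) = ∑ q ∈ T, W q * U q := by
    have h1 := congrArg (fun z => z.2.2) hsum
    simpa only [Prod.snd_sum, Prod.fst_sum, Prod.smul_snd, Prod.smul_fst, smul_eq_mul,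
      ← hppz, v] using h1
  refine ⟨p, x, ⟨?_, ?_, ?_, ?_⟩, ?_⟩
  · intro k
    by_cases hk : k ∈ Set.range e
    · obtain ⟨a, rfl⟩ := hk
      rw [pe]; exact hTI _ (hppT a)
    · rw [pn k hk]; simp
  · intro i k
    by_cases hk : k ∈ Set.range e
    · obtain ⟨a, rfl⟩ := hk
      rw [xe]
      exact mul_nonneg (hw a).le (div_nonneg (mul_nonneg (S.lam_pos i).le ((hf i).1 _))
        (hW _ (hppT a)).le)
    · rw [xn i k hk]
  · intro i
    rw [hsumE _ (xn i)]
    simp only [xe, s1]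
  · rw [cst, hsumE _ (fun k hk => by simp [cdn k hk])]
    simp only [cde, abs_mul, abs_of_pos (hw _)]
    rw [s2, ← ECE_one S f]
    exact hE
  · rw [pay, hsumE _ (fun k hk => by simp [cmn k hk])]
    simp only [cme, pe]
    rw [s3, payoff_eq S U f T (le_refl _)]

/-- Bounds on the number of predictions of an optimal
`(ε, ℓ_1)`-calibrated predictor with the miscalibration structure: at most `n + 2`
predictions overall, at most `4` per event, and at most `2` per true expected outcome
(with one of the two in the under- or over-confidence intervals when there are two). -/
theorem statement7 {n : ℕ} (S : Setup n) (ε : ℝ) (hε : 0 ≤ ε)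
    (U : ℝ → ℝ) (hU0 : ∀ p ∈ Set.Icc (0 : ℝ) 1, 0 ≤ U p)
    (hUsc : UpperSemicontinuousOn U (Set.Icc (0 : ℝ) 1)) :
    ∃ (pL pH : ℝ) (fstar : Fin n → ℝ →₀ ℝ),
      0 ≤ pL ∧ pL ≤ pH ∧ pH ≤ 1 ∧
      IsPredictor fstar ∧ ECE S 1 fstar ≤ ε ∧
      (∀ f : Fin n → ℝ →₀ ℝ, IsPredictor f → ECE S 1 f ≤ ε →
        payoffEI S U f ≤ payoffEI S U fstar) ∧
      (∀ p ∈ suppF fstar, p ≤ pL → p ≤ kappa S fstar p) ∧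
      (∀ p ∈ suppF fstar, pL ≤ p → p ≤ pH → p = kappa S fstar p) ∧
      (∀ p ∈ suppF fstar, pH ≤ p → kappa S fstar p ≤ p) ∧
      (suppF fstar).card ≤ n + 2 ∧
      (∀ i, (fstar i).support.card ≤ 4) ∧
      (∀ q : ℝ, ((suppF fstar).filter fun p => kappa S fstar p = q).card ≤ 2 ∧
        (((suppF fstar).filter fun p => kappa S fstar p = q).card = 2 →
          ∃ p ∈ (suppF fstar).filter fun p => kappa S fstar p = q,
            p ≤ pL ∨ pH ≤ p)) := by
  classical
  obtain ⟨p, x, h⟩ := exists_opt (N := n + 3) (by omega) S ε hε U hU0 hUsc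
  have hx := h.feas.hx
  set T : Finset (Fin (n + 3)) := Finset.univ.filter fun k => 0 < cm x k with hTdef
  have memT : ∀ k, k ∈ T ↔ 0 < cm x k := by intro k; simp [hTdef]
  have injT : Set.InjOn p (T : Set (Fin (n + 3))) := by
    intro k hk l hl hkl
    by_contra hne
    exact h.inj k l hne ((memT k).1 hk) ((memT l).1 hl) hkl
  let F : Fin n → ℝ →₀ ℝ := fun i => ∑ k, Finsupp.single (p k) (x i k / S.lam i)
  have Fval : ∀ i q, F i q = ∑ k, if p k = q then x i k / S.lam i else 0 := by
    intro i q
    simp [F, Finsupp.finsetSum_apply, Finsupp.single_apply]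
  have xT : ∀ i k, x i k ≠ 0 → k ∈ T := fun i k hk => (memT k).2 (cm_pos x hx i k hk)
  have FA : ∀ i, ∀ k ∈ T, F i (p k) = x i k / S.lam i := by
    intro i k hk
    rw [Fval, Finset.sum_eq_single k]
    · simp
    · intro l _ hlk
      by_cases hp : p l = p k
      · rw [if_pos hp]
        by_cases h0 : x i l = 0
        · simp [h0]
        · exact absurd (injT (xT i l h0) hk hp) hlk
      · rw [if_neg hp]
    · intro hk; exact absurd (Finset.mem_univ k) hk
  have FB : ∀ i q, F i q ≠ 0 → ∃ k ∈ T, p k = q ∧ x i k ≠ 0 := by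
    intro i q hq
    rw [Fval] at hq
    obtain ⟨k, _, hk⟩ := Finset.exists_ne_zero_of_sum_ne_zero hq
    by_cases hp : p k = q
    · rw [if_pos hp] at hk
      have : x i k ≠ 0 := by rintro h0; simp [h0] at hk
      exact ⟨k, xT i k this, hp, this⟩
    · rw [if_neg hp] at hk; exact absurd rfl hk
  have hmar : ∀ k ∈ T, marginal S F (p k) = cm x k := by
    intro k hk
    refine Finset.sum_congr rfl fun i _ => ?_
    rw [FA i k hk]
    have := (S.lam_pos i).ne'
    field_simp
  have hkap : ∀ k ∈ T, kappa S F (p k) = kp S x k := by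
    intro k hk
    rw [kappa, hmar k hk, kp]
    congr 1
    refine Finset.sum_congr rfl fun i _ => ?_
    rw [FA i k hk]
    have := (S.lam_pos i).ne'
    field_simp
  have hsupp : suppF F = T.image p := by
    ext q
    simp only [suppF, Finset.mem_biUnion, Finset.mem_univ, true_and, Finsupp.mem_support_iff,
      Finset.mem_image]
    constructor
    · rintro ⟨i, hi⟩
      obtain ⟨k, hk, hp, _⟩ := FB i q hi
      exact ⟨k, hk, hp⟩
    · rintro ⟨k, hk, rfl⟩
      obtain ⟨i, _, hi⟩ := Finset.exists_ne_zero_of_sum_ne_zero ((memT k).1 hk).ne'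
      exact ⟨i, by rw [FA i k hk]; exact div_ne_zero hi (S.lam_pos i).ne'⟩
  have hsuppi : ∀ i, (F i).support ⊆ (Finset.univ.filter fun k => x i k ≠ 0).image p := by
    intro i q hq
    obtain ⟨k, hk, hp, h0⟩ := FB i q (Finsupp.mem_support_iff.1 hq)
    exact Finset.mem_image.2 ⟨k, by simpa using h0, hp⟩
  have hpred : IsPredictor F := by
    intro i
    refine ⟨?_, ?_, ?_⟩
    · intro q
      rw [Fval]
      refine Finset.sum_nonneg fun k _ => ?_
      split_ifs
      · exact div_nonneg (hx i k) (S.lam_pos i).le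
      · exact le_rfl
    · intro q hq
      obtain ⟨k, _, hp, _⟩ := FB i q (Finsupp.mem_support_iff.1 hq)
      rw [← hp]; exact h.feas.hp k
    · have := sum_supp F i _ (le_refl _) (fun _ => 1)
      simp only [mul_one] at this
      rw [this, hsupp, Finset.sum_image injT, Finset.sum_congr rfl (FA i), ← Finset.sum_div,
        Finset.sum_subset (Finset.subset_univ T), h.feas.row i, div_self (S.lam_pos i).ne']
      intro k _ hk
      by_contra h0
      exact hk (xT i k h0)
  have cm0 : ∀ k, k ∉ T → cm x k = 0 := by
    intro k hk
    refine Finset.sum_eq_zero fun i _ => ?_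
    by_contra h0
    exact hk (xT i k h0)
  have hECE : ECE S 1 F = cst S p x := by
    rw [ECE_one, hsupp, Finset.sum_image injT, cst,
      ← Finset.sum_subset (Finset.subset_univ T)]
    · refine Finset.sum_congr rfl fun k hk => ?_
      have := (memT k).1 hk
      rw [hmar k hk, hkap k hk, cd_eq S p x k this.ne', abs_mul, abs_of_pos this]
    · intro k _ hk
      have : cd S p x k = 0 := by
        refine Finset.sum_eq_zero fun i _ => ?_
        by_cases h0 : x i k = 0
        · simp [h0]
        · exact absurd (xT i k h0) hk
      simp [this]
  have hpay : payoffEI S U F = pay U p x := by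
    rw [payoff_eq S U F _ (le_refl _), hsupp, Finset.sum_image injT, pay,
      ← Finset.sum_subset (Finset.subset_univ T)]
    · exact Finset.sum_congr rfl fun k hk => by rw [hmar k hk]
    · intro k _ hk
      simp [cm0 k hk]
  have kp0 : ∀ k ∈ T, 0 ≤ kp S x k := fun k hk =>
    div_nonneg (Finset.sum_nonneg fun i _ => mul_nonneg (hx i k) (S.theta_mem i).1)
      ((memT k).1 hk).le
  have kp1 : ∀ k ∈ T, kp S x k ≤ 1 := fun k hk => by
    rw [kp, div_le_one ((memT k).1 hk)]
    exact Finset.sum_le_sum fun i _ => mul_le_of_le_one_right (hx i k) (S.theta_mem i).2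
  obtain ⟨c, hc1, hc2⟩ : ∃ c : ℝ,
      (∀ q ∈ (T.filter fun k => p k < kp S x k).image p, q < c) ∧
      (∀ q ∈ (T.filter fun k => kp S x k < p k).image p, c < q) := by
    apply Order.exists_between_finsets
    intro a ha b hb
    obtain ⟨k, hk, rfl⟩ := Finset.mem_image.1 ha
    obtain ⟨l, hl, rfl⟩ := Finset.mem_image.1 hb
    rw [Finset.mem_filter] at hk hl
    exact h.sep k l ((memT k).1 hk.1) ((memT l).1 hl.1) hk.2 hl.2
  obtain ⟨c', hc0', hc1', hlo, hhi⟩ : ∃ c' : ℝ, 0 ≤ c' ∧ c' ≤ 1 ∧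
      (∀ k ∈ T, p k < kp S x k → p k < c') ∧ (∀ k ∈ T, kp S x k < p k → c' < p k) := by
    refine ⟨max 0 (min c 1), le_max_left _ _, max_le zero_le_one (min_le_right _ _), ?_, ?_⟩
    · intro k hk hlt
      exact lt_max_of_lt_right (lt_min (hc1 _ (Finset.mem_image_of_mem _
        (Finset.mem_filter.2 ⟨hk, hlt⟩))) (hlt.trans_le (kp1 k hk)))
    · intro k hk hlt
      exact max_lt ((kp0 k hk).trans_lt hlt) (min_lt_of_left_lt (hc2 _ (Finset.mem_image_of_mem _
        (Finset.mem_filter.2 ⟨hk, hlt⟩))))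
  refine ⟨c', c', F, hc0', le_rfl, hc1', hpred, hECE ▸ h.feas.cost, ?_, ?_, ?_, ?_, ?_, ?_, ?_⟩
  · intro f hf hfE
    obtain ⟨p', x', hfe, hpe⟩ := embed S ε U f hf hfE
    rw [hpay, ← hpe]
    exact h.h1 _ _ hfe
  · intro q hq hqc
    rw [hsupp] at hq
    obtain ⟨k, hk, rfl⟩ := Finset.mem_image.1 hq
    rw [hkap k hk]
    by_contra hcon
    exact absurd (hhi k hk (not_le.1 hcon)) (not_lt.2 hqc)
  · intro q hq hqc hqc'
    rw [hsupp] at hq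
    obtain ⟨k, hk, rfl⟩ := Finset.mem_image.1 hq
    rw [hkap k hk]
    refine le_antisymm ?_ ?_
    · by_contra hcon
      exact absurd (hhi k hk (not_le.1 hcon)) (not_lt.2 hqc')
    · by_contra hcon
      exact absurd (hlo k hk (not_le.1 hcon)) (not_lt.2 hqc)
  · intro q hq hqc
    rw [hsupp] at hq
    obtain ⟨k, hk, rfl⟩ := Finset.mem_image.1 hq
    rw [hkap k hk]
    by_contra hcon
    exact absurd (hlo k hk (not_le.1 hcon)) (not_lt.2 hqc)
  · rw [hsupp]
    exact Finset.card_image_le.trans (h.card_le.trans (by omega))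
  · intro i
    exact (Finset.card_le_card (hsuppi i)).trans (Finset.card_image_le.trans (h.four i))
  · intro q
    constructor
    · refine le_trans (Finset.card_le_card ?_) ((Finset.card_image_le (f := p)).trans (h.no3 q))
      intro r hr
      rw [Finset.mem_filter, hsupp] at hr
      obtain ⟨k, hk, rfl⟩ := Finset.mem_image.1 hr.1
      refine Finset.mem_image_of_mem _ ?_
      rw [Finset.mem_filter]
      exact ⟨Finset.mem_univ k, (memT k).1 hk, (hkap k hk).symm.trans hr.2⟩
    · intro h2
      obtain ⟨r, hr⟩ : ((suppF F).filter fun p => kappa S F p = q).Nonempty := by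
        rw [← Finset.card_pos]; omega
      exact ⟨r, hr, le_total r c'⟩

end PersuasiveCalibration
end
end

section
/- (Contracting predictions.) Let g ∈ MPC(λ) be a finitely supported distribution on [0,1], let p_1, p_2 ∈ supp(g) be distinct, and set p† = (g(p_1)·p_1 + g(p_2)·p_2)/(g(p_1) + g(p_2)). Define the distribution g† on [0,1] by g†(p) = g(p) for all p ∈ [0,1]\{p_1, p_2, p†}, g†(p†) = g(p†) + g(p_1) + g(p_2), and g†(p_1) = g†(p_2) = 0 whenever p_1, p_2 ≠ p†. Then g† is a finitely supported probability distribution on [0,1] and g† ∈ MPC(λ). -/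
open Finset

noncomputable section

namespace PersuasiveCalibration

variable {n : ℕ}

variable {A σT : Type*}

theorem aux_int (q s : ℝ) (hs : 0 ≤ s) :
    IntervalIntegrable (fun x : ℝ => if q ≤ x then (1:ℝ) else 0) MeasureTheory.volume 0 s ∧
    (∫ x in (0 : ℝ)..s, if q ≤ x then (1:ℝ) else 0) = max (s - q) 0 - max (0 - q) 0 := by
  have hint : IntervalIntegrable (fun x : ℝ => if q ≤ x then (1:ℝ) else 0)
      MeasureTheory.volume 0 s := by
    apply Monotone.intervalIntegrable
    intro x y hxy
    dsimp only
    split_ifs <;> first | linarith | norm_num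
  refine ⟨hint, ?_⟩
  refine intervalIntegral.integral_eq_sub_of_hasDeriv_right (f := fun x => max (x - q) 0) ?_ ?_ hint
  · exact Continuous.continuousOn (by fun_prop)
  · intro x _
    by_cases h : q ≤ x
    · simp only [h, if_true]
      refine HasDerivWithinAt.congr (f := fun y => y - q)
        ((hasDerivAt_id x).sub_const q).hasDerivWithinAt ?_ ?_
      · intro y hy
        have : x < y := hy
        exact max_eq_left (by linarith)
      · exact max_eq_left (by linarith)
    · simp only [h, if_false]
      push Not at h
      apply HasDerivAt.hasDerivWithinAt
      refine (hasDerivAt_const x (0:ℝ)).congr_of_eventuallyEq ?_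
      filter_upwards [Iio_mem_nhds h] with y hy
      have : y < q := hy
      exact max_eq_right (by linarith)

theorem aux_cdf (μ : ℝ →₀ ℝ) (s : ℝ) (hs : 0 ≤ s) :
    (∫ x in (0 : ℝ)..s, cdf μ x) =
      μ.sum fun q m => m * (max (s - q) 0 - max (0 - q) 0) := by
  have h : ∀ x, cdf μ x = ∑ q ∈ μ.support, μ q * (if q ≤ x then (1:ℝ) else 0) := by
    intro x
    simp [cdf, Finset.sum_filter]
  simp only [h]
  rw [intervalIntegral.integral_finsetSum]
  · unfold Finsupp.sum
    refine Finset.sum_congr rfl fun q _ => ?_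
    rw [intervalIntegral.integral_const_mul, (aux_int q s hs).2]
  · intro q _
    exact (aux_int q s hs).1.const_mul _

theorem aux_sum (g gd : ℝ →₀ ℝ) (p₁ p₂ pd a b : ℝ)
    (h : gd + Finsupp.single p₁ a + Finsupp.single p₂ b = g + Finsupp.single pd (a + b))
    (φ : ℝ → ℝ) :
    (gd.sum fun q m => m * φ q) + a * φ p₁ + b * φ p₂
      = (g.sum fun q m => m * φ q) + (a + b) * φ pd := by
  have h0 : ∀ q, (0:ℝ) * φ q = 0 := fun q => zero_mul _
  have ha : ∀ q (x y : ℝ), (x + y) * φ q = x * φ q + y * φ q := fun q x y => add_mul _ _ _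
  have := congrArg (fun μ : ℝ →₀ ℝ => μ.sum fun q m => m * φ q) h
  simp only [Finsupp.sum_add_index' (h := fun q m => m * φ q) h0 ha] at this
  simpa only [Finsupp.sum_single_index, zero_mul] using this

/-- Contracting two support points of `g ∈ MPC(λ)` onto their
barycenter yields again a finitely supported probability distribution in `MPC(λ)`. -/
theorem statement9 {n : ℕ} (S : Setup n) (g : ℝ →₀ ℝ) (hg : IsDist g)
    (hmpc : MPCprior S g)
    (p₁ p₂ : ℝ) (h₁ : p₁ ∈ g.support) (h₂ : p₂ ∈ g.support) (hne : p₁ ≠ p₂)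
    (pd : ℝ) (hpd : pd = (g p₁ * p₁ + g p₂ * p₂) / (g p₁ + g p₂))
    (gd : ℝ →₀ ℝ)
    (hgd1 : ∀ p, p ≠ p₁ → p ≠ p₂ → p ≠ pd → gd p = g p)
    (hgd2 : gd pd = g pd + g p₁ + g p₂)
    (hgd3 : p₁ ≠ pd → gd p₁ = 0) (hgd4 : p₂ ≠ pd → gd p₂ = 0) :
    IsDist gd ∧ MPCprior S gd := by
  obtain ⟨g0, g1, gs⟩ := hg
  have a0 : 0 < g p₁ := lt_of_le_of_ne (g0 _) (Ne.symm (Finsupp.mem_support_iff.1 h₁))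
  have b0 : 0 < g p₂ := lt_of_le_of_ne (g0 _) (Ne.symm (Finsupp.mem_support_iff.1 h₂))
  obtain ⟨l1, u1⟩ := g1 _ h₁
  obtain ⟨l2, u2⟩ := g1 _ h₂
  have hm : (g p₁ + g p₂) * pd = g p₁ * p₁ + g p₂ * p₂ := by
    rw [hpd]; field_simp
  have n1 : p₁ ≠ pd := by
    intro h
    apply hne
    rw [← h] at hm
    have : g p₂ * (p₁ - p₂) = 0 := by linarith
    rcases mul_eq_zero.1 this with h | h <;> linarith
  have n2 : p₂ ≠ pd := by
    intro h
    apply hne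
    rw [← h] at hm
    have : g p₁ * (p₁ - p₂) = 0 := by linarith
    rcases mul_eq_zero.1 this with h | h <;> linarith
  have z1 := hgd3 n1
  have z2 := hgd4 n2
  have ld : 0 ≤ pd := by rw [hpd]; positivity
  have ud : pd ≤ 1 := by
    rw [hpd, div_le_one (by linarith)]
    nlinarith
  have key : gd + Finsupp.single p₁ (g p₁) + Finsupp.single p₂ (g p₂)
      = g + Finsupp.single pd (g p₁ + g p₂) := by
    ext p
    simp only [Finsupp.add_apply, Finsupp.single_apply]
    by_cases e1 : p = p₁
    · subst e1; simp [z1, hne.symm, n1.symm]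
    by_cases e2 : p = p₂
    · subst e2; simp [z2, hne, n2.symm]
    by_cases e3 : p = pd
    · subst e3; simp [hgd2, n1, n2]; ring
    · simp [hgd1 p e1 e2 e3, Ne.symm e1, Ne.symm e2, Ne.symm e3]
  have hsum := aux_sum g gd p₁ p₂ pd _ _ key
  refine ⟨⟨?_, ?_, ?_⟩, ?_, ?_⟩
  · intro p
    by_cases e3 : p = pd
    · subst e3; rw [hgd2]; linarith [g0 p]
    by_cases e1 : p = p₁
    · subst e1; exact z1.ge
    by_cases e2 : p = p₂
    · subst e2; exact z2.ge
    · rw [hgd1 p e1 e2 e3]; exact g0 p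
  · intro p hp
    rw [Finsupp.mem_support_iff] at hp
    by_cases e3 : p = pd
    · subst e3; exact ⟨ld, ud⟩
    by_cases e1 : p = p₁
    · subst e1; exact absurd z1 hp
    by_cases e2 : p = p₂
    · subst e2; exact absurd z2 hp
    · rw [hgd1 p e1 e2 e3] at hp; exact g1 p (Finsupp.mem_support_iff.2 hp)
  · have h := hsum (fun _ => 1)
    simp only [mul_one, Finsupp.sum] at h
    linarith
  · intro s hs
    refine le_trans ?_ (hmpc.1 s hs)
    rw [aux_cdf _ _ hs.1, aux_cdf _ _ hs.1]
    have h := hsum (fun q => max (s - q) 0 - max (0 - q) 0)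
    simp only [max_eq_right (show 0 - p₁ ≤ 0 by linarith),
      max_eq_right (show 0 - p₂ ≤ 0 by linarith),
      max_eq_right (show 0 - pd ≤ 0 by linarith), sub_zero] at h
    have m1 := mul_le_mul_of_nonneg_left (le_max_left (s - p₁) 0) a0.le
    have m2 := mul_le_mul_of_nonneg_left (le_max_left (s - p₂) 0) b0.le
    have m3 := mul_nonneg a0.le (le_max_right (s - p₁) 0)
    have m4 := mul_nonneg b0.le (le_max_right (s - p₂) 0)
    have : (g p₁ + g p₂) * max (s - pd) 0
        ≤ g p₁ * max (s - p₁) 0 + g p₂ * max (s - p₂) 0 := by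
      rcases max_cases (s - pd) 0 with ⟨e, _⟩ | ⟨e, _⟩ <;> rw [e] <;> nlinarith
    linarith
  · rw [← hmpc.2, aux_cdf _ _ zero_le_one, aux_cdf _ _ zero_le_one]
    have h := hsum (fun q => max (1 - q) 0 - max (0 - q) 0)
    simp only [max_eq_right (show 0 - p₁ ≤ 0 by linarith),
      max_eq_right (show 0 - p₂ ≤ 0 by linarith),
      max_eq_right (show 0 - pd ≤ 0 by linarith),
      max_eq_left (show 0 ≤ 1 - p₁ by linarith),
      max_eq_left (show 0 ≤ 1 - p₂ by linarith),
      max_eq_left (show 0 ≤ 1 - pd by linarith), sub_zero] at h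
    linarith

end PersuasiveCalibration
end
end

section
/- (Monotonicity of predictions with respect to true expected outcomes.) Let (g, χ) be a feasible solution of LP-TwoStep with t = 1. Then there exists χ† such that (g, χ†) is feasible for LP-TwoStep with t = 1, the objective values agree (Σ_{q,p} χ†(q,p)·U(p) = Σ_{q,p} χ(q,p)·U(p)), the calibration cost does not increase (Σ_{q,p} χ†(q,p)·|q−p| ≤ Σ_{q,p} χ(q,p)·|q−p|), and for all q_1 < q_2 in supp(g): max{p : χ†(q_1,p) > 0} ≤ min{p : χ†(q_2,p) > 0}. -/
open Finset

noncomputable section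

namespace PersuasiveCalibration

variable {n : ℕ}

variable {A σT : Type*}

lemma swap_cost {q₁ q₂ p₁ p₂ : ℝ} (hq : q₁ < q₂) (hp : p₂ < p₁) :
    |q₁ - p₂| + |q₂ - p₁| ≤ |q₁ - p₁| + |q₂ - p₂| := by
  rcases abs_cases (q₁ - p₂) with h1 | h1 <;> rcases abs_cases (q₂ - p₁) with h2 | h2 <;>
  rcases abs_cases (q₁ - p₁) with h3 | h3 <;> rcases abs_cases (q₂ - p₂) with h4 | h4 <;>
  linarith

/-- Moving mass `d` from `(q₁,p₁), (q₂,p₂)` to `(q₁,p₂), (q₂,p₁)`. -/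
def swapF (f : ℝ × ℝ → ℝ) (d q₁ q₂ p₁ p₂ : ℝ) (x : ℝ × ℝ) : ℝ :=
  f x + d * ((if x = (q₁, p₂) then 1 else 0) + (if x = (q₂, p₁) then 1 else 0)
    - (if x = (q₁, p₁) then 1 else 0) - (if x = (q₂, p₂) then 1 else 0))

lemma swapF_sum (A B : Finset ℝ) (f c : ℝ × ℝ → ℝ) (d q₁ q₂ p₁ p₂ : ℝ)
    (h1 : q₁ ∈ A) (h2 : q₂ ∈ A) (h3 : p₁ ∈ B) (h4 : p₂ ∈ B) :
    ∑ x ∈ A ×ˢ B, swapF f d q₁ q₂ p₁ p₂ x * c x = ∑ x ∈ A ×ˢ B, f x * c x +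
      d * (c (q₁, p₂) + c (q₂, p₁) - c (q₁, p₁) - c (q₂, p₂)) := by
  have key : ∀ q ∈ A, ∀ p ∈ B, ∑ x ∈ A ×ˢ B, (if x = (q, p) then (1 : ℝ) else 0) * c x
      = c (q, p) := by
    intro q hq p hp
    simp [hq, hp]
  rw [← key q₁ h1 p₂ h4, ← key q₂ h2 p₁ h3, ← key q₁ h1 p₁ h3, ← key q₂ h2 p₂ h4,
    ← Finset.sum_add_distrib, ← Finset.sum_sub_distrib, ← Finset.sum_sub_distrib,
    Finset.mul_sum, ← Finset.sum_add_distrib]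
  refine Finset.sum_congr rfl fun x _ => ?_
  unfold swapF
  ring

lemma exists_monotone (A B : Finset ℝ) (χ : ℝ × ℝ → ℝ) (hχ : ∀ x, 0 ≤ χ x)
    (hs : ∀ x, x ∉ A ×ˢ B → χ x = 0) :
    ∃ f : ℝ × ℝ → ℝ, (∀ x, 0 ≤ f x) ∧ (∀ x, x ∉ A ×ˢ B → f x = 0) ∧
      (∀ a : ℝ → ℝ, ∑ x ∈ A ×ˢ B, f x * a x.1 = ∑ x ∈ A ×ˢ B, χ x * a x.1) ∧
      (∀ a : ℝ → ℝ, ∑ x ∈ A ×ˢ B, f x * a x.2 = ∑ x ∈ A ×ˢ B, χ x * a x.2) ∧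
      (∑ x ∈ A ×ˢ B, f x * |x.1 - x.2| ≤ ∑ x ∈ A ×ˢ B, χ x * |x.1 - x.2|) ∧
      ∀ q₁ q₂ p₁ p₂ : ℝ, q₁ < q₂ → 0 < f (q₁, p₁) → 0 < f (q₂, p₂) → p₁ ≤ p₂ := by
  set K : Set (ℝ × ℝ → ℝ) := {f | (∀ x, 0 ≤ f x) ∧ (∀ x, x ∉ A ×ˢ B → f x = 0) ∧
      (∀ a : ℝ → ℝ, ∑ x ∈ A ×ˢ B, f x * a x.1 = ∑ x ∈ A ×ˢ B, χ x * a x.1) ∧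
      (∀ a : ℝ → ℝ, ∑ x ∈ A ×ˢ B, f x * a x.2 = ∑ x ∈ A ×ˢ B, χ x * a x.2) ∧
      (∑ x ∈ A ×ˢ B, f x * |x.1 - x.2| ≤ ∑ x ∈ A ×ˢ B, χ x * |x.1 - x.2|)} with hK
  have hcont : ∀ c : ℝ × ℝ → ℝ, Continuous fun f : ℝ × ℝ → ℝ => ∑ x ∈ A ×ˢ B, f x * c x := by
    intro c
    fun_prop
  have hclosed : IsClosed K := by
    simp only [hK, Set.setOf_and, Set.setOf_forall]
    refine IsClosed.inter ?_ (IsClosed.inter ?_ (IsClosed.inter ?_ (IsClosed.inter ?_ ?_)))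
    · exact isClosed_iInter fun x => isClosed_le continuous_const (continuous_apply x)
    · exact isClosed_iInter fun x => isClosed_iInter fun _ =>
        isClosed_eq (continuous_apply x) continuous_const
    · exact isClosed_iInter fun a => isClosed_eq (hcont fun x => a x.1) continuous_const
    · exact isClosed_iInter fun a => isClosed_eq (hcont fun x => a x.2) continuous_const
    · exact isClosed_le (hcont fun x => |x.1 - x.2|) continuous_const
  have hbig : IsCompact (Set.univ.pi fun _ : ℝ × ℝ => Set.Icc (0 : ℝ) (∑ x ∈ A ×ˢ B, χ x)) :=
    isCompact_univ_pi fun _ => isCompact_Icc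
  have hcomp : IsCompact K := by
    refine hbig.of_isClosed_subset hclosed ?_
    rintro f ⟨h0, h1, h2, -, -⟩ x -
    refine ⟨h0 x, ?_⟩
    by_cases hx : x ∈ A ×ˢ B
    · have := h2 fun _ => 1
      simp only [mul_one] at this
      rw [← this]
      exact Finset.single_le_sum (f := f) (fun y _ => h0 y) hx
    · rw [h1 x hx]
      exact Finset.sum_nonneg fun y _ => hχ y
  have hne : K.Nonempty := ⟨χ, hχ, hs, fun _ => rfl, fun _ => rfl, le_rfl⟩
  obtain ⟨f, ⟨h0, h1, h2, h3, h4⟩, hmax⟩ :=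
    hcomp.exists_isMaxOn hne (hcont fun x => x.1 * x.2).continuousOn
  refine ⟨f, h0, h1, h2, h3, h4, ?_⟩
  intro q₁ q₂ p₁ p₂ hq hf1 hf2
  by_contra! hp
  have m1 : (q₁, p₁) ∈ A ×ˢ B := by
    by_contra hc
    exact hf1.ne' (h1 _ hc)
  have m2 : (q₂, p₂) ∈ A ×ˢ B := by
    by_contra hc
    exact hf2.ne' (h1 _ hc)
  rw [Finset.mem_product] at m1 m2
  set d := min (f (q₁, p₁)) (f (q₂, p₂)) with hd
  have hdpos : 0 < d := lt_min hf1 hf2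
  have hsum := fun c => swapF_sum A B f c d q₁ q₂ p₁ p₂ m1.1 m2.1 m1.2 m2.2
  have hmem : swapF f d q₁ q₂ p₁ p₂ ∈ K := by
    refine ⟨?_, ?_, ?_, ?_, ?_⟩
    · intro x
      have hx := h0 x
      have e1 : d ≤ f (q₁, p₁) := min_le_left _ _
      have e2 : d ≤ f (q₂, p₂) := min_le_right _ _
      unfold swapF
      by_cases c1 : x = (q₁, p₁)
      · subst c1
        simp [hq.ne, hp.ne']
        linarith
      · by_cases c2 : x = (q₂, p₂)
        · subst c2
          simp [hq.ne', hp.ne]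
          linarith
        · simp only [c1, c2, if_false]
          have : (0 : ℝ) ≤ (if x = (q₁, p₂) then 1 else 0) + (if x = (q₂, p₁) then 1 else 0) := by
            positivity
          nlinarith [mul_nonneg hdpos.le this]
    · intro x hx
      have n1 : x ≠ (q₁, p₂) := by
        rintro rfl
        exact hx (Finset.mem_product.2 ⟨m1.1, m2.2⟩)
      have n2 : x ≠ (q₂, p₁) := by
        rintro rfl
        exact hx (Finset.mem_product.2 ⟨m2.1, m1.2⟩)
      have n3 : x ≠ (q₁, p₁) := by
        rintro rfl
        exact hx (Finset.mem_product.2 m1)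
      have n4 : x ≠ (q₂, p₂) := by
        rintro rfl
        exact hx (Finset.mem_product.2 m2)
      simp [swapF, n1, n2, n3, n4, h1 x hx]
    · intro a
      rw [hsum fun x => a x.1, h2]
      ring
    · intro a
      rw [hsum fun x => a x.2, h3]
      ring
    · rw [hsum fun x => |x.1 - x.2|]
      have := swap_cost hq hp
      have := mul_nonneg hdpos.le (sub_nonneg.2 this)
      dsimp only
      nlinarith
  have hle := hmax hmem
  simp only [Set.mem_setOf_eq] at hle
  rw [hsum fun x => x.1 * x.2] at hle
  have := mul_pos hdpos (mul_pos (sub_pos.2 hq) (sub_pos.2 hp))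
  dsimp only at hle
  nlinarith

lemma supp_sum (T : Finset (ℝ × ℝ)) (χ : ℝ × ℝ →₀ ℝ) (hs : ∀ x, x ∉ T → χ x = 0)
    (c : ℝ × ℝ → ℝ) : ∑ x ∈ χ.support, χ x * c x = ∑ x ∈ T, χ x * c x := by
  apply Finset.sum_subset
  · intro x hx
    by_contra hc
    exact (Finsupp.mem_support_iff.1 hx) (hs x hc)
  · intro x _ hx
    rw [Finsupp.notMem_support_iff.1 hx, zero_mul]

lemma planMargQ_eq (χ : ℝ × ℝ →₀ ℝ) (q : ℝ) :
    planMargQ χ q = ∑ x ∈ χ.support, χ x * (if x.1 = q then 1 else 0) := by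
  simp [planMargQ, Finset.sum_filter]

/-- Monotonicity of the predictions with respect to their true
expected outcomes: every feasible solution `(g, χ)` of LP-TwoStep with `t = 1` can be
replaced by a feasible `(g, χ†)` with the same objective value, no larger calibration
cost, and monotone predictions. -/
theorem statement10 {n : ℕ} (S : Setup n) (ε : ℝ) (hε : 0 ≤ ε) (U : ℝ → ℝ)
    (hU0 : ∀ p ∈ Set.Icc (0 : ℝ) 1, 0 ≤ U p)
    (χ : ℝ × ℝ →₀ ℝ) (g : ℝ →₀ ℝ) (h : LPFeasible S ε 1 χ g) :
    ∃ χ' : ℝ × ℝ →₀ ℝ, LPFeasible S ε 1 χ' g ∧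
      LPobj U χ' = LPobj U χ ∧
      (∑ x ∈ χ'.support, χ' x * |x.1 - x.2|) ≤ (∑ x ∈ χ.support, χ x * |x.1 - x.2|) ∧
      ∀ q₁ q₂ : ℝ, q₁ ∈ g.support → q₂ ∈ g.support → q₁ < q₂ →
        ∀ p₁ p₂ : ℝ, 0 < χ' (q₁, p₁) → 0 < χ' (q₂, p₂) → p₁ ≤ p₂ := by
  obtain ⟨hχ, hIcc, hcost, hmarg, hg, hm⟩ := h
  set A := χ.support.image Prod.fst with hA
  set B := χ.support.image Prod.snd with hB
  have hs : ∀ x, x ∉ A ×ˢ B → χ x = 0 := by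
    intro x hx
    by_contra hc
    have := Finsupp.mem_support_iff.2 hc
    exact hx (Finset.mem_product.2 ⟨Finset.mem_image_of_mem _ this, Finset.mem_image_of_mem _ this⟩)
  obtain ⟨f, h0, h1, h2, h3, h4, h5⟩ := exists_monotone A B χ hχ hs
  let χ' : ℝ × ℝ →₀ ℝ := Finsupp.onFinset (A ×ˢ B) f fun x hx => by
    by_contra hc
    exact hx (h1 x hc)
  have hf : ∀ x, χ' x = f x := fun _ => rfl
  have hs' : ∀ x, x ∉ A ×ˢ B → χ' x = 0 := h1
  have hc : (∑ x ∈ χ'.support, χ' x * |x.1 - x.2|) ≤ ∑ x ∈ χ.support, χ x * |x.1 - x.2| := by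
    rw [supp_sum _ χ' hs' fun x => |x.1 - x.2|, supp_sum _ χ hs fun x => |x.1 - x.2|]
    exact h4
  refine ⟨χ', ⟨h0, ?_, ?_, ?_, hg, hm⟩, ?_, hc, ?_⟩
  · intro x hx
    have hx' : x ∈ A ×ˢ B := by
      by_contra hc
      exact (Finsupp.mem_support_iff.1 hx) (hs' x hc)
    rw [Finset.mem_product] at hx'
    obtain ⟨y, hy, hy'⟩ := Finset.mem_image.1 hx'.1
    obtain ⟨z, hz, hz'⟩ := Finset.mem_image.1 hx'.2
    exact ⟨hy' ▸ (hIcc y hy).1, hz' ▸ (hIcc z hz).2⟩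
  · refine le_trans ?_ hcost
    simpa only [planCost, Real.rpow_one] using hc
  · intro q
    rw [← hmarg q, planMargQ_eq, planMargQ_eq, supp_sum _ χ' hs' fun x => if x.1 = q then 1 else 0,
      supp_sum _ χ hs fun x => if x.1 = q then 1 else 0]
    exact h2 fun y => if y = q then 1 else 0
  · unfold LPobj
    rw [supp_sum _ χ' hs' fun x => U x.2, supp_sum _ χ hs fun x => U x.2]
    exact h3 U
  · intro q₁ q₂ _ _ hq p₁ p₂ hp₁ hp₂
    exact h5 q₁ q₂ p₁ p₂ hq hp₁ hp₂

end PersuasiveCalibration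
end
end
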